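/- arXiv:2209.12044 — 3 statements merged into one kernel-verified Lean document; each statement's English description precedes it below -/
import Mathlib

section
/- Let C = {a, b} and let W = {w ∈ C^ω : both a and b occur infinitely often in w} (a prefix-independent objective). For m ≥ 1 let G_m be the C-graph with vertex set {0, 1, …, m−1} and edges i →a j and j →b i for all i < j. Then G_m satisfies W, and every monotone partially ordered C-graph (U, ≤) which satisfies W and admits a morphism G_m → U contains an antichain of cardinality m (i.e., has width ≥ m). Hence no monotone graph of width < m satisfying W embeds G_m, even though W has ε-memory ≤ 2. -/
universe u v

open Cardinal

/-- A `C`-pregraph on vertex type `V`: a set of coloured directed edges. -/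
structure Pregraph (C : Type u) (V : Type u) : Type u where
  Edge : V → C → V → Prop

namespace Pregraph

variable {C V V' : Type u}

/-- A pregraph is a graph when it has no sinks. -/
def NoSinks (G : Pregraph C V) : Prop :=
  ∀ v : V, ∃ c v', G.Edge v c v'

/-- An infinite path with vertex sequence `π` and colour sequence `γ`. -/
def InfPath (G : Pregraph C V) (π : ℕ → V) (γ : ℕ → C) : Prop :=
  ∀ i, G.Edge (π i) (γ i) (π (i + 1))

/-- A finite path starting at a given vertex, recorded as a list of (colour, target) pairs. -/
def ListPath (G : Pregraph C V) : V → List (C × V) → Prop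
  | _, [] => True
  | v, e :: p => G.Edge v e.1 e.2 ∧ G.ListPath e.2 p

/-- Endpoint of a finite path. -/
def pathEnd : V → List (C × V) → V
  | v, [] => v
  | _, e :: p => pathEnd e.2 p

/-- A pretree: every vertex is reached from the root by a unique finite path. -/
def IsPretree (G : Pregraph C V) (t₀ : V) : Prop :=
  ∀ t : V, ∃! p : List (C × V), G.ListPath t₀ p ∧ pathEnd t₀ p = t

/-- A tree: a pretree without sinks. -/
def IsTree (G : Pregraph C V) (t₀ : V) : Prop :=
  G.NoSinks ∧ G.IsPretree t₀

/-- Morphisms of pregraphs. -/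
def IsMorphism (G : Pregraph C V) (H : Pregraph C V') (φ : V → V') : Prop :=
  ∀ ⦃v c v'⦄, G.Edge v c v' → H.Edge (φ v) c (φ v')

/-- The value of a vertex with respect to a valuation: the supremum of the values of
infinite paths from the vertex. -/
noncomputable def valueAt {X : Type v} [CompleteLinearOrder X]
    (G : Pregraph C V) (val : (ℕ → C) → X) (v : V) : X :=
  sSup {x | ∃ π γ, π 0 = v ∧ G.InfPath π γ ∧ val γ = x}

/-- A vertex satisfies an objective `W` if every infinite path from it has colour
sequence in `W`. -/
def VertexSat (G : Pregraph C V) (W : Set (ℕ → C)) (v : V) : Prop :=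
  ∀ π γ, π 0 = v → G.InfPath π γ → γ ∈ W

/-- A pregraph satisfies an objective if all its vertices do. -/
def Sat (G : Pregraph C V) (W : Set (ℕ → C)) : Prop :=
  ∀ v, G.VertexSat W v

/-- Monotonicity of a pregraph with respect to an order relation `le`:
`u ≥ v →c v' ≥ u'` implies `u →c u'`. -/
def MonotoneRel (G : Pregraph C V) (le : V → V → Prop) : Prop :=
  ∀ ⦃u v c v' u'⦄, le v u → G.Edge v c v' → le u' v' → G.Edge u c u'

end Pregraph

/-- The strict relation associated to `le`. -/
def strictOf {V : Type u} (le : V → V → Prop) : V → V → Prop :=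
  fun a b => le a b ∧ a ≠ b

/-- `w' : ℕ → C` is a completion of `w : ℕ → Option C` if the projection of `w`
(deleting all `none`'s, i.e. all ε's) is a prefix of (or equal to) `w'`. -/
def IsCompletion {C : Type u} (w : ℕ → Option C) (w' : ℕ → C) : Prop :=
  ∀ (k n : ℕ) (h : n < ((List.range k).filterMap w).length),
    ((List.range k).filterMap w).get ⟨n, h⟩ = w' n

/-- The ε-extension of a valuation, where `none` plays the role of ε.
If the projection of `w` is infinite, its unique completion `w'` yields `val w'`;
otherwise this is the infimum of `val` over all completions. -/
noncomputable def epsExtension {C : Type u} {X : Type v} [CompleteLinearOrder X]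
    (val : (ℕ → C) → X) : (ℕ → Option C) → X :=
  fun w => sInf {x | ∃ w', IsCompletion w w' ∧ val w' = x}

/-- The ε-extension of an objective. -/
def epsObjective {C : Type u} (W : Set (ℕ → C)) : Set (ℕ → Option C) :=
  {w | ∃ w', IsCompletion w w' ∧ w' ∈ W}

/-- Strategies: `S` is a graph, `πS` a morphism sending `s₀` to `v₀`, and every Adam move
can be simulated from every state above the corresponding vertex. -/
def IsStrategy {C V VS : Type u} (G : Pregraph C V) (VEve : Set V) (v₀ : V)
    (S : Pregraph C VS) (πS : VS → V) (s₀ : VS) : Prop :=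
  S.NoSinks ∧ S.IsMorphism G πS ∧ πS s₀ = v₀ ∧
    ∀ v, v ∉ VEve → ∀ c v', G.Edge v c v' →
      ∀ s, πS s = v → ∃ s', πS s' = v' ∧ S.Edge s c s'

/-- The value of a game: the infimum of the values of its strategies. -/
noncomputable def gameValue {C V : Type u} {X : Type v} [CompleteLinearOrder X]
    (G : Pregraph C V) (VEve : Set V) (v₀ : V) (val : (ℕ → C) → X) : X :=
  sInf {x | ∃ (VS : Type u) (S : Pregraph C VS) (πS : VS → V) (s₀ : VS),
    IsStrategy G VEve v₀ S πS s₀ ∧ S.valueAt val s₀ = x}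

/-- An ε-strategy: a product strategy over `M` (vertices form a subset `D ⊆ V × M`,
projection is the first component) whose ε-edges do not update the memory. -/
def IsEpsStrategy {C V M : Type u} (G : Pregraph (Option C) V) (VEve : Set V) (v₀ : V)
    (D : Set (V × M)) (S : Pregraph (Option C) ↥D) (s₀ : ↥D) : Prop :=
  IsStrategy G VEve v₀ S (fun s => (s : V × M).1) s₀ ∧
    ∀ s s' : ↥D, S.Edge s none s' → (s : V × M).2 = (s' : V × M).2

/-- A product strategy is chromatic if memory updates only depend on the current memory
state and the colour read. -/
def IsChromaticStrat {C V M : Type u} (D : Set (V × M)) (S : Pregraph C ↥D) : Prop :=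
  ∃ δ : M → C → M, ∀ (s s' : ↥D) (c : C), S.Edge s c s' → (s' : V × M).2 = δ (s : V × M).2 c

/-- ε-separated monotone graph over `M` (with `part` the partition into fibres):
`v ≤ v' ↔ v' →ε v` is a partial order making the graph monotone, ε-edges stay inside
fibres, and each fibre is totally ordered. -/
structure IsEpsSeparated {C V M : Type u} (U : Pregraph (Option C) V) (part : V → M) : Prop where
  refl : ∀ v, U.Edge v none v
  antisymm : ∀ ⦃v v'⦄, U.Edge v none v' → U.Edge v' none v → v = v'
  mono : ∀ ⦃u v c v' u'⦄, U.Edge u none v → U.Edge v c v' → U.Edge v' none u' → U.Edge u c u'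
  sameFiber : ∀ ⦃v v'⦄, U.Edge v none v' → part v = part v'
  total : ∀ ⦃v v'⦄, part v = part v' → U.Edge v none v' ∨ U.Edge v' none v

/-- Well-foundedness of the order `v ≤ v' ↔ v' →ε v` of an ε-separated graph. -/
def EpsWellFounded {C V : Type u} (U : Pregraph (Option C) V) : Prop :=
  WellFounded (fun v v' => U.Edge v' none v ∧ v ≠ v')

/-- A chromatic ε-separated graph: colours act uniformly on the parts. -/
def IsChromaticGraph {C V M : Type u} (U : Pregraph (Option C) V) (part : V → M) : Prop :=
  ∃ δ : M → C → M, ∀ ⦃v c v'⦄, U.Edge v (some c) v' → part v' = δ (part v) c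

/-- `(κ, val)`-universality for a valuation: every tree of cardinality `< κ` maps into `U`
by a morphism preserving the value at the root. -/
def IsUniversal {C VU : Type u} {X : Type v} [CompleteLinearOrder X]
    (κ : Cardinal.{u}) (val : (ℕ → C) → X) (U : Pregraph C VU) : Prop :=
  ∀ (VT : Type u) (T : Pregraph C VT) (t₀ : VT), T.IsTree t₀ → #VT < κ →
    ∃ φ : VT → VU, T.IsMorphism U φ ∧ U.valueAt val (φ t₀) ≤ T.valueAt val t₀

/-- A valuation has ε-memory ≤ μ: in every ε-game, the value is attained by an ε-strategy
of memory ≤ μ. -/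
def HasEpsMemLE {C : Type u} {X : Type v} [CompleteLinearOrder X]
    (val : (ℕ → C) → X) (μ : Cardinal.{u}) : Prop :=
  ∀ (V : Type u) (G : Pregraph (Option C) V), G.NoSinks → ∀ (VEve : Set V) (v₀ : V),
    ∃ (M : Type u) (D : Set (V × M)) (S : Pregraph (Option C) ↥D) (s₀ : ↥D),
      #M ≤ μ ∧ IsEpsStrategy G VEve v₀ D S s₀ ∧
      S.valueAt (epsExtension val) s₀ ≤ gameValue G VEve v₀ (epsExtension val)

/-- Eve wins a game with objective `W`: there exists a winning strategy. -/
def EveWins {C V : Type u} (G : Pregraph C V) (VEve : Set V) (v₀ : V)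
    (W : Set (ℕ → C)) : Prop :=
  ∃ (VS : Type u) (S : Pregraph C VS) (πS : VS → V) (s₀ : VS),
    IsStrategy G VEve v₀ S πS s₀ ∧ S.VertexSat W s₀

/-- An objective has ε-memory ≤ μ: in every ε-game that Eve wins, she has a winning
ε-strategy of memory ≤ μ. -/
def ObjEpsMemLE {C : Type u} (W : Set (ℕ → C)) (μ : Cardinal.{u}) : Prop :=
  ∀ (V : Type u) (G : Pregraph (Option C) V), G.NoSinks → ∀ (VEve : Set V) (v₀ : V),
    EveWins G VEve v₀ (epsObjective W) →
    ∃ (M : Type u) (D : Set (V × M)) (S : Pregraph (Option C) ↥D) (s₀ : ↥D),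
      #M ≤ μ ∧ IsEpsStrategy G VEve v₀ D S s₀ ∧ S.VertexSat (epsObjective W) s₀

/-- An objective has ε-memory < μ: in every ε-game that Eve wins, she has a winning
ε-strategy of memory < μ. -/
def ObjEpsMemLT {C : Type u} (W : Set (ℕ → C)) (μ : Cardinal.{u}) : Prop :=
  ∀ (V : Type u) (G : Pregraph (Option C) V), G.NoSinks → ∀ (VEve : Set V) (v₀ : V),
    EveWins G VEve v₀ (epsObjective W) →
    ∃ (M : Type u) (D : Set (V × M)) (S : Pregraph (Option C) ↥D) (s₀ : ↥D),
      #M < μ ∧ IsEpsStrategy G VEve v₀ D S s₀ ∧ S.VertexSat (epsObjective W) s₀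

/-- An objective has ε-free memory ≤ μ: in every game that Eve wins, she has a winning
strategy all of whose fibres have cardinality ≤ μ. -/
def ObjMemLE {C : Type u} (W : Set (ℕ → C)) (μ : Cardinal.{u}) : Prop :=
  ∀ (V : Type u) (G : Pregraph C V), G.NoSinks → ∀ (VEve : Set V) (v₀ : V),
    EveWins G VEve v₀ W →
    ∃ (VS : Type u) (S : Pregraph C VS) (πS : VS → V) (s₀ : VS),
      IsStrategy G VEve v₀ S πS s₀ ∧ (∀ v : V, #(↥(πS ⁻¹' {v})) ≤ μ) ∧
      S.VertexSat W s₀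

/-- The objective over `C = {a, b}` (here `a = true`, `b = false`): both letters occur
infinitely often. -/
def bothInfOften : Set (ℕ → Bool) :=
  {w | (∀ N, ∃ n, N ≤ n ∧ w n = true) ∧ (∀ N, ∃ n, N ≤ n ∧ w n = false)}

/-- The graph `G_m` on `{0, …, m-1}` with edges `i →a j` and `j →b i` for `i < j`. -/
def Gm (m : ℕ) : Pregraph Bool (Fin m) :=
  ⟨fun i c j => (c = true ∧ i < j) ∨ (c = false ∧ j < i)⟩


/-- Non-ε letters read among the first `k`. -/
def projL (w : ℕ → Option Bool) (k : ℕ) : List Bool := (List.range k).filterMap w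

theorem projL_succ_some {w : ℕ → Option Bool} {k : ℕ} {x : Bool} (h : w k = some x) :
    projL w (k + 1) = projL w k ++ [x] := by
  simp [projL, List.range_succ, List.filterMap_append, h]

theorem projL_succ_none {w : ℕ → Option Bool} {k : ℕ} (h : w k = none) :
    projL w (k + 1) = projL w k := by
  simp [projL, List.range_succ, List.filterMap_append, h]

theorem projL_prefix_succ (w : ℕ → Option Bool) (k : ℕ) :
    projL w k <+: projL w (k + 1) := by
  cases h : w k with
  | none => rw [projL_succ_none h]
  | some x => rw [projL_succ_some h]; exact List.prefix_append _ _

theorem projL_prefix (w : ℕ → Option Bool) {k l : ℕ} (h : k ≤ l) :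
    projL w k <+: projL w l := by
  induction l, h using Nat.le_induction with
  | base => exact List.prefix_rfl
  | succ l _ ih => exact ih.trans (projL_prefix_succ w l)

theorem projL_len (w : ℕ → Option Bool) {k l : ℕ} (h : k ≤ l) :
    (projL w k).length ≤ (projL w l).length := (projL_prefix w h).length_le

theorem projL_unbounded {w : ℕ → Option Bool} (h : ∀ N, ∃ n, N ≤ n ∧ w n ≠ none) (n : ℕ) :
    ∃ k, n < (projL w k).length := by
  induction n with
  | zero =>
    obtain ⟨k, _, hk⟩ := h 0
    obtain ⟨x, hx⟩ := Option.ne_none_iff_exists'.mp hk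
    exact ⟨k + 1, by rw [projL_succ_some hx]; simp⟩
  | succ n ih =>
    obtain ⟨k, hk⟩ := ih
    obtain ⟨l, hl, hl2⟩ := h k
    obtain ⟨x, hx⟩ := Option.ne_none_iff_exists'.mp hl2
    refine ⟨l + 1, ?_⟩
    have := projL_len w hl
    rw [projL_succ_some hx]; simp; omega

theorem eps_forward {w : ℕ → Option Bool} (hw : w ∈ epsObjective bothInfOften)
    (h : ∀ N, ∃ n, N ≤ n ∧ w n ≠ none) (x : Bool) (N : ℕ) : ∃ n, N ≤ n ∧ w n = some x := by
  obtain ⟨w', hc, hW⟩ := hw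
  have hx : ∀ N, ∃ n, N ≤ n ∧ w' n = x := by
    cases x
    · exact hW.2
    · exact hW.1
  obtain ⟨n, hn, hnx⟩ := hx (projL w N).length
  classical
  have hex := projL_unbounded h n
  have h1 := Nat.find_spec hex
  have h2 : ∀ k < Nat.find hex, ¬ n < (projL w k).length := fun k hk => Nat.find_min hex hk
  generalize Nat.find hex = k at h1 h2
  cases k with
  | zero => simp [projL] at h1
  | succ k =>
    have h3 := h2 k (by omega)
    have hNk : N ≤ k := by
      by_contra hcon
      have := projL_len w (show k + 1 ≤ N by omega)
      omega
    refine ⟨k, hNk, ?_⟩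
    cases hk : w k with
    | none => rw [projL_succ_none hk] at h1; omega
    | some y =>
      have hlen : (projL w (k+1)).length = (projL w k).length + 1 := by
        rw [projL_succ_some hk]; simp
      have hnn : n = (projL w k).length := by omega
      have h4 := hc (k + 1) n h1
      change (projL w (k+1)).get ⟨n, h1⟩ = w' n at h4
      have h5 : (projL w (k+1)).get ⟨n, h1⟩ = y := by
        subst hnn
        simp [projL_succ_some hk]
      rw [← hnx, ← h4, h5]

theorem eps_backward {w : ℕ → Option Bool}
    (h : (∀ N, ∃ n, N ≤ n ∧ w n ≠ none) → ∀ (x : Bool) (N : ℕ), ∃ n, N ≤ n ∧ w n = some x) :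
    w ∈ epsObjective bothInfOften := by
  classical
  let w' : ℕ → Bool := fun n =>
    if hn : ∃ k, n < (projL w k).length then
      (projL w hn.choose)[n]'hn.choose_spec else (n % 2 == 0)
  have hc : ∀ (k n : ℕ) (h : n < (projL w k).length), (projL w k)[n] = w' n := by
    intro k n hk
    have hn : ∃ k, n < (projL w k).length := ⟨k, hk⟩
    have : w' n = (projL w hn.choose)[n]'hn.choose_spec := dif_pos hn
    rw [this]
    rcases le_total k hn.choose with hle | hle
    · exact (projL_prefix w hle).getElem hk
    · exact ((projL_prefix w hle).getElem hn.choose_spec).symm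
  refine ⟨w', fun k n hk => hc k n hk, ?_⟩
  suffices ∀ x N, ∃ n, N ≤ n ∧ w' n = x from ⟨this true, this false⟩
  intro x N
  by_cases hinf : ∀ N, ∃ n, N ≤ n ∧ w n ≠ none
  · obtain ⟨K, hK⟩ := projL_unbounded hinf N
    obtain ⟨n, hn, hnx⟩ := h hinf x K
    refine ⟨(projL w n).length, by have := projL_len w hn; omega, ?_⟩
    rw [← hc (n + 1) _ (by rw [projL_succ_some hnx]; simp)]
    simp [projL_succ_some hnx]
  · push Not at hinf
    obtain ⟨B, hB⟩ := hinf
    have hst : ∀ k, (projL w k).length ≤ (projL w B).length := by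
      intro k
      rcases le_total k B with hk | hk
      · exact projL_len w hk
      · induction k, hk using Nat.le_induction with
        | base => exact le_rfl
        | succ l hl ih => rw [projL_succ_none (hB l hl)]; exact ih
    have hw : ∀ n, (projL w B).length ≤ n → w' n = (n % 2 == 0) := by
      intro n hn
      refine dif_neg ?_
      rintro ⟨k, hk⟩
      have := hst k
      omega
    cases x
    · refine ⟨2 * (N + (projL w B).length) + 1, by omega, ?_⟩
      rw [hw _ (by omega)]; simp
    · refine ⟨2 * (N + (projL w B).length), by omega, ?_⟩
      rw [hw _ (by omega)]; simp

section Strat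

variable {VS : Type} (S : Pregraph (Option Bool) VS)

/-- `n` ε-steps followed by one step of colour `y`. -/
def PreN (y : Bool) : ℕ → VS → VS → Prop
  | 0, s, t => S.Edge s (some y) t
  | n + 1, s, t => ∃ s1, S.Edge s none s1 ∧ PreN y n s1 t

/-- `t` is reached from `s` by ε-steps and then one step of colour `y`. -/
def PreRel (y : Bool) (t s : VS) : Prop := ∃ n, PreN S y n s t

theorem preRel_wf (hS : S.Sat (epsObjective bothInfOften)) (y : Bool) :
    WellFounded (PreRel S y) := by
  classical
  by_contra hcon
  have hna : ∃ s, ¬ Acc (PreRel S y) s := by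
    by_contra h
    push Not at h
    exact hcon ⟨h⟩
  have hstep : ∀ s, ¬ Acc (PreRel S y) s → ∃ n t, PreN S y n s t ∧ ¬ Acc (PreRel S y) t := by
    intro s hs
    by_contra h
    push Not at h
    exact hs ⟨s, fun t ⟨n, hn⟩ => h n t hn⟩
  let Q : VS → ℕ → Prop := fun s n => ∃ t, PreN S y n s t ∧ ¬ Acc (PreRel S y) t
  let T := {p : VS × ℕ // Q p.1 p.2}
  have hnext : ∀ p : T, ∃ q : T, S.Edge p.1.1 (some y) q.1.1 ∨
      (S.Edge p.1.1 none q.1.1 ∧ q.1.2 < p.1.2) := by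
    rintro ⟨⟨s, n⟩, t, hn, ht⟩
    cases n with
    | zero =>
      obtain ⟨n', t', h1, h2⟩ := hstep t ht
      exact ⟨⟨(t, n'), t', h1, h2⟩, Or.inl hn⟩
    | succ n =>
      obtain ⟨s1, he, hn1⟩ := hn
      exact ⟨⟨(s1, n), t, hn1, ht⟩, Or.inr ⟨he, Nat.lt_succ_self n⟩⟩
  choose nx hnx using hnext
  obtain ⟨s, hs⟩ := hna
  obtain ⟨n, t, h1, h2⟩ := hstep s hs
  let p : ℕ → T := fun i => nx^[i] ⟨(s, n), t, h1, h2⟩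
  have hp : ∀ i, p (i + 1) = nx (p i) := fun i => Function.iterate_succ_apply' nx i _
  let γ : ℕ → Option Bool := fun i =>
    if S.Edge (p i).1.1 (some y) (p (i+1)).1.1 then some y else none
  have hγ : ∀ i, (γ i = some y ∧ S.Edge (p i).1.1 (some y) (p (i+1)).1.1) ∨
      (γ i = none ∧ S.Edge (p i).1.1 none (p (i+1)).1.1 ∧ (p (i+1)).1.2 < (p i).1.2) := by
    intro i
    by_cases hi : S.Edge (p i).1.1 (some y) (p (i+1)).1.1
    · exact Or.inl ⟨if_pos hi, hi⟩
    · refine Or.inr ⟨if_neg hi, ?_⟩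
      have := hnx (p i)
      rw [← hp] at this
      exact this.resolve_left hi
  have hw : γ ∈ epsObjective bothInfOften := by
    refine hS (p 0).1.1 (fun i => (p i).1.1) γ rfl ?_
    intro i
    rcases hγ i with ⟨h, h'⟩ | ⟨h, h', _⟩ <;> rw [h] <;> exact h'
  have hinf : ∀ N, ∃ n, N ≤ n ∧ γ n ≠ none := by
    intro N
    by_contra h
    push Not at h
    have hd : ∀ i, (p (N + i)).1.2 + i ≤ (p N).1.2 := by
      intro i
      induction i with
      | zero => simp
      | succ i ih =>
        rcases hγ (N + i) with ⟨h', _⟩ | ⟨_, _, h'⟩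
        · rw [h _ (by omega)] at h'; cases h'
        · rw [show N + (i + 1) = N + i + 1 from rfl]; omega
    have := hd ((p N).1.2 + 1)
    omega
  obtain ⟨i, _, hi⟩ := eps_forward hw hinf (!y) 0
  rcases hγ i with ⟨h, _⟩ | ⟨h, _⟩ <;> rw [hi] at h <;> simp at h

theorem exists_rank (hS : S.Sat (epsObjective bothInfOften)) (y : Bool) :
    ∃ r : VS → Ordinal.{0}, (∀ s t, S.Edge s none t → r t ≤ r s) ∧
      (∀ s t, S.Edge s (some y) t → r t < r s) := by
  have : IsWellFounded VS (PreRel S y) := ⟨preRel_wf S hS y⟩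
  refine ⟨IsWellFounded.rank (PreRel S y), fun s t h => ?_, fun s t h => ?_⟩
  · rw [IsWellFounded.rank_eq (PreRel S y) t]
    refine Ordinal.iSup_le ?_
    rintro ⟨u, n, hu⟩
    exact Order.succ_le_of_lt (IsWellFounded.rank_lt_of_rel ⟨n + 1, t, h, hu⟩)
  · exact IsWellFounded.rank_lt_of_rel ⟨0, h⟩

end Strat

theorem no_inf_desc (r : ℕ → Ordinal.{0}) (P : ℕ → Prop) (h1 : ∀ i, r (i + 1) ≤ r i)
    (h2 : ∀ i, P i → r (i + 1) < r i) (h3 : ∀ N, ∃ n, N ≤ n ∧ P n) : False := by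
  have hanti : Antitone r := antitone_nat_of_succ_le h1
  obtain ⟨x, ⟨N, rfl⟩, hx⟩ := WellFounded.has_min (wellFounded_lt (α := Ordinal.{0}))
    (Set.range r) ⟨r 0, 0, rfl⟩
  obtain ⟨n, hn, hP⟩ := h3 N
  exact hx (r (n + 1)) ⟨n + 1, rfl⟩ ((h2 n hP).trans_le (hanti hn))

theorem eps_tail {w : ℕ → Option Bool} (hw : w ∈ epsObjective bothInfOften) :
    (fun i => w (i + 1)) ∈ epsObjective bothInfOften := by
  apply eps_backward
  intro h x N
  have h' : ∀ N, ∃ n, N ≤ n ∧ w n ≠ none := by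
    intro N
    obtain ⟨n, hn, hne⟩ := h N
    exact ⟨n + 1, by omega, hne⟩
  obtain ⟨n, hn, hx⟩ := eps_forward hw h' x (N + 1)
  refine ⟨n - 1, by omega, ?_⟩
  have : n - 1 + 1 = n := by omega
  simpa [this] using hx

theorem sat_step {VS : Type} {S : Pregraph (Option Bool) VS} {s t : VS} {c : Option Bool}
    (hs : S.VertexSat (epsObjective bothInfOften) s) (h : S.Edge s c t) :
    S.VertexSat (epsObjective bothInfOften) t := by
  intro p g hp hpath
  have := hs (fun i => Nat.casesOn i s p) (fun i => Nat.casesOn i c g) rfl (by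
    intro i
    cases i with
    | zero => simpa [hp] using h
    | succ i => exact hpath i)
  exact eps_tail this

/-- A win for Eve is witnessed by a strategy satisfying the objective everywhere. -/
theorem eveWins_sat {V : Type} {G : Pregraph (Option Bool) V} {VEve : Set V} {v₀ : V}
    (h : EveWins G VEve v₀ (epsObjective bothInfOften)) :
    ∃ (VS : Type) (S : Pregraph (Option Bool) VS) (πS : VS → V) (s₀ : VS),
      IsStrategy G VEve v₀ S πS s₀ ∧ S.Sat (epsObjective bothInfOften) := by
  obtain ⟨VS, S, πS, s₀, ⟨hns, hm, h0, hA⟩, hsat⟩ := h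
  refine ⟨{s : VS // S.VertexSat (epsObjective bothInfOften) s},
    ⟨fun s c t => S.Edge s.1 c t.1⟩, fun s => πS s.1, ⟨s₀, hsat⟩, ⟨?_, ?_, h0, ?_⟩, ?_⟩
  · intro s
    obtain ⟨c, t, ht⟩ := hns s.1
    exact ⟨c, ⟨t, sat_step s.2 ht⟩, ht⟩
  · intro s c t ht
    exact hm ht
  · intro v hv c v' he s hs
    obtain ⟨t, ht, hst⟩ := hA v hv c v' he s.1 hs
    exact ⟨⟨t, sat_step s.2 hst⟩, ht, hst⟩
  · intro s p g hp hpath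
    exact s.2 (fun i => (p i).1) g (by simp [hp]) (fun i => hpath i)

theorem mem_two : ObjEpsMemLE bothInfOften 2 := by
  intro V G _ VEve v₀ hwin
  obtain ⟨VS, S, πS, s₀, ⟨hns, hm, h0, hA⟩, hsat⟩ := eveWins_sat hwin
  choose r hr0 hr1 using fun x : Bool => exists_rank S hsat (!x)
  have : Nonempty VS := ⟨s₀⟩
  have hmin : ∀ (x : Bool) (v : V), v ∈ Set.range πS →
      ∃ s, πS s = v ∧ ∀ s', πS s' = v → r x s ≤ r x s' := by
    intro x v hv
    obtain ⟨s, rfl⟩ := hv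
    obtain ⟨t, ht, ht'⟩ := WellFounded.has_min
      (InvImage.wf (r x) (wellFounded_lt (α := Ordinal.{0}))) {s' | πS s' = πS s} ⟨s, rfl⟩
    exact ⟨t, ht, fun s' hs' => not_lt.mp (ht' s' hs')⟩
  choose! σ hσ hσmin using hmin
  let D : Set (V × Bool) := {p | p.1 ∈ Set.range πS}
  let E : Pregraph (Option Bool) ↥D := ⟨fun p c q => ∃ s', S.Edge (σ p.1.2 p.1.1) c s' ∧
    πS s' = q.1.1 ∧ q.1.2 = if c = some p.1.2 then !p.1.2 else p.1.2⟩
  refine ⟨Bool, D, E, ⟨(v₀, true), s₀, h0⟩, by simp, ⟨⟨?_, ?_, rfl, ?_⟩, ?_⟩, ?_⟩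
  · rintro ⟨⟨v, x⟩, hv⟩
    obtain ⟨c, t, ht⟩ := hns (σ x v)
    exact ⟨c, ⟨(πS t, if c = some x then !x else x), t, rfl⟩, t, ht, rfl, rfl⟩
  · rintro ⟨⟨v, x⟩, hv⟩ c ⟨⟨v', x'⟩, hv'⟩ ⟨t, ht, h1, _⟩
    have := hm ht
    rw [h1, hσ x v hv] at this
    exact this
  · rintro v hvE c v' he ⟨⟨u, x⟩, hu⟩ rfl
    obtain ⟨t, ht, hst⟩ := hA u hvE c v' he (σ x u) (hσ x u hu)
    exact ⟨⟨(v', if c = some x then !x else x), t, ht⟩, rfl, t, hst, ht, rfl⟩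
  · rintro ⟨⟨v, x⟩, hv⟩ ⟨⟨v', x'⟩, hv'⟩ ⟨t, ht, h1, h2⟩
    simpa using h2.symm
  · intro p γ _ hpath
    apply eps_backward
    intro hinf
    have hstep : ∀ i, (p (i+1)).1.2 = if γ i = some (p i).1.2 then !(p i).1.2 else (p i).1.2 := by
      intro i
      obtain ⟨t, _, _, h⟩ := hpath i
      exact h
    have hstay : ∀ i, γ i ≠ some (p i).1.2 → (p (i+1)).1.2 = (p i).1.2 := by
      intro i hi
      rw [hstep, if_neg hi]
    -- switches happen infinitely often
    have hsw : ∀ N, ∃ n, N ≤ n ∧ γ n = some (p n).1.2 := by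
      intro N
      by_contra hcon
      push Not at hcon
      have hconst : ∀ i, (p (N + i)).1.2 = (p N).1.2 := by
        intro i
        induction i with
        | zero => rfl
        | succ i ih => rw [← add_assoc, hstay _ (hcon _ (by omega)), ih]
      generalize hx : (p N).1.2 = x at hconst
      have key : ∀ i, ∃ t, S.Edge (σ x (p (N+i)).1.1) (γ (N+i)) t ∧
          r x (σ x (p (N+(i+1))).1.1) ≤ r x t := by
        intro i
        obtain ⟨t, ht, h1, _⟩ := hpath (N + i)
        rw [hconst i] at ht
        exact ⟨t, ht, hσmin x _ (p (N+i+1)).2 t h1⟩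
      have hcol : ∀ i, γ (N+i) = none ∨ γ (N+i) = some (!x) := by
        intro i
        have := hcon (N+i) (by omega)
        rw [hconst i] at this
        revert this
        rcases γ (N+i) with _ | y
        · simp
        · cases x <;> cases y <;> simp
      refine no_inf_desc (fun i => r x (σ x (p (N+i)).1.1)) (fun i => γ (N+i) ≠ none) ?_ ?_ ?_
      · intro i
        obtain ⟨t, ht, hle⟩ := key i
        refine hle.trans ?_
        rcases hcol i with h | h <;> rw [h] at ht
        · exact hr0 x _ _ ht
        · exact (hr1 x _ _ ht).le
      · intro i hi
        obtain ⟨t, ht, hle⟩ := key i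
        refine hle.trans_lt ?_
        rw [(hcol i).resolve_left hi] at ht
        exact hr1 x _ _ ht
      · intro K
        obtain ⟨n, hn, hne⟩ := hinf (N + K)
        refine ⟨n - N, by omega, ?_⟩
        rwa [show N + (n - N) = n by omega]
    intro x N
    by_contra hcon
    push Not at hcon
    obtain ⟨n, hn, hnx⟩ := hsw N
    have hne : (p n).1.2 ≠ x := by
      intro h
      exact hcon n hn (h ▸ hnx)
    have hx1 : (p (n+1)).1.2 = x := by
      rw [hstep, if_pos hnx]
      revert hne
      cases (p n).1.2 <;> cases x <;> simp
    have hx : ∀ i, (p (n + 1 + i)).1.2 = x := by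
      intro i
      induction i with
      | zero => exact hx1
      | succ i ih =>
        rw [← add_assoc, hstay _ (by rw [ih]; exact hcon _ (by omega)), ih]
    obtain ⟨k, hk, hkx⟩ := hsw (n + 1)
    have := hx (k - (n + 1))
    rw [show n + 1 + (k - (n+1)) = k by omega] at this
    exact hcon k (by omega) (this ▸ hkx)

theorem Gm_sat (m : ℕ) : (Gm m).Sat bothInfOften := by
  intro v p γ _ hpath
  constructor
  · intro N
    by_contra hcon
    push Not at hcon
    have hd : ∀ i, (p (N + i)).1 + i ≤ (p N).1 := by
      intro i
      induction i with
      | zero => simp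
      | succ i ih =>
        rcases hpath (N + i) with ⟨h, _⟩ | ⟨_, h⟩
        · exact absurd h (hcon _ (by omega))
        · have h' : (p (N + i + 1)).1 < (p (N + i)).1 := h
          rw [show N + (i + 1) = N + i + 1 from rfl]; omega
    have := hd ((p N).1 + 1)
    omega
  · intro N
    by_contra hcon
    push Not at hcon
    have hd : ∀ i, i ≤ (p (N + i)).1 := by
      intro i
      induction i with
      | zero => simp
      | succ i ih =>
        rcases hpath (N + i) with ⟨_, h⟩ | ⟨h, _⟩
        · have h' : (p (N + i)).1 < (p (N + i + 1)).1 := h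
          rw [show N + (i + 1) = N + i + 1 from rfl]; omega
        · exact absurd h (hcon _ (by omega))
    have := hd m
    have := (p (N + m)).2
    omega

theorem no_loop {VU : Type} {U : Pregraph Bool VU} (hU : U.Sat bothInfOften) (v : VU) (c : Bool) :
    ¬ U.Edge v c v := by
  intro h
  have hw := hU v (fun _ => v) (fun _ => c) rfl (fun _ => h)
  obtain ⟨_, _, h1⟩ := hw.1 0
  obtain ⟨_, _, h2⟩ := hw.2 0
  simp_all

/-- The objective "infinitely many `a`'s and infinitely many `b`'s" has
ε-memory ≤ 2, each `G_m` satisfies it, and yet every monotone graph satisfying it into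
which `G_m` maps contains an antichain of cardinality `m`. -/
theorem embed_trees_not_graphs :
    ObjEpsMemLE bothInfOften 2 ∧
    ∀ m : ℕ, 1 ≤ m →
      (Gm m).Sat bothInfOften ∧
      ∀ (VU : Type) (le : VU → VU → Prop) (U : Pregraph Bool VU),
        IsPartialOrder VU le → U.MonotoneRel le → U.NoSinks →
        U.Sat bothInfOften →
        (∃ φ : Fin m → VU, (Gm m).IsMorphism U φ) →
        ∃ A : Set VU, IsAntichain le A ∧ #(↥A) = (m : Cardinal) := by
  refine ⟨mem_two, fun m _ => ⟨Gm_sat m, ?_⟩⟩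
  rintro VU le U hpo hmono _ hsat ⟨φ, hφ⟩
  have hne : ∀ i j, i ≠ j → ¬ le (φ i) (φ j) := by
    intro i j hij hle
    have hedge : ∃ c, U.Edge (φ i) c (φ j) := by
      rcases lt_or_gt_of_ne hij with h | h
      · exact ⟨true, hφ (Or.inl ⟨rfl, h⟩)⟩
      · exact ⟨false, hφ (Or.inr ⟨rfl, h⟩)⟩
    obtain ⟨c, hc⟩ := hedge
    exact no_loop hsat (φ i) c (hmono (hpo.refl _) hc hle)
  have hinj : Function.Injective φ := by
    intro i j hij
    by_contra h
    exact hne i j h (hij ▸ hpo.refl _)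
  refine ⟨Set.range φ, ?_, ?_⟩
  · rintro _ ⟨i, rfl⟩ _ ⟨j, rfl⟩ hij
    exact hne i j (fun h => hij (h ▸ rfl))
  · rw [Cardinal.mk_range_eq φ hinj]
    simp
end

section
/- Let W₁, W₂ ⊆ C^ω be objectives such that for every cardinal κ, W₁ admits a (κ, W₁)-universal monotone wqo and W₂ admits a (κ, W₂)-universal monotone wqo. Then for every cardinal κ, the intersection W₁ ∩ W₂ admits a (κ, W₁ ∩ W₂)-universal monotone wqo. In particular, the intersection of two objectives with finite ε-memory has locally finite memory, i.e., ε-free memory < ℵ₀. -/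
universe u v

open Cardinal

/-- `(κ, W)`-universality for an objective: every tree of cardinality < κ maps into `U`
by a morphism preserving the value at the root (if the root satisfies `W`, so does its
image). -/
def IsUniversalObj {C VU : Type u} (κ : Cardinal.{u}) (W : Set (ℕ → C))
    (U : Pregraph C VU) : Prop :=
  ∀ (VT : Type u) (T : Pregraph C VT) (t₀ : VT), T.IsTree t₀ → #VT < κ →
    ∃ φ : VT → VU, T.IsMorphism U φ ∧ (T.VertexSat W t₀ → U.VertexSat W (φ t₀))

/-- `W` admits, for every cardinal κ, a `(κ, W)`-universal monotone wqo: a well-monotone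
graph all of whose antichains are finite. -/
def HasWqoUniversal {C : Type u} (W : Set (ℕ → C)) : Prop :=
  ∀ κ : Cardinal.{u},
    ∃ (VU : Type u) (le : VU → VU → Prop) (U : Pregraph C VU),
      IsPartialOrder VU le ∧ WellFounded (strictOf le) ∧ U.MonotoneRel le ∧
      (∀ A : Set VU, IsAntichain le A → A.Finite) ∧
      IsUniversalObj κ W U

/-- An objective has locally finite (ε-free) memory: in every game that Eve wins, she has
a winning strategy all of whose fibres are finite. -/
def LocallyFiniteMemory {C : Type u} (W : Set (ℕ → C)) : Prop :=
  ∀ (V : Type u) (G : Pregraph C V), G.NoSinks → ∀ (VEve : Set V) (v₀ : V),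
    EveWins G VEve v₀ W →
    ∃ (VS : Type u) (S : Pregraph C VS) (πS : VS → V) (s₀ : VS),
      IsStrategy G VEve v₀ S πS s₀ ∧ (∀ v : V, #(↥(πS ⁻¹' {v})) < ℵ₀) ∧
      S.VertexSat W s₀

/-- Dependent choice. -/
theorem dep_choice_seq {α : Type*} (P : α → Prop) (r : α → α → Prop)
    (h : ∀ a, P a → ∃ b, P b ∧ r a b) (a₀ : α) (h₀ : P a₀) :
    ∃ f : ℕ → α, f 0 = a₀ ∧ ∀ n, P (f n) ∧ r (f n) (f (n + 1)) := by
  choose! g hg using h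
  have hP : ∀ n, P (Nat.rec a₀ (fun _ a => g a) n : α) := by
    intro n
    induction n with
    | zero => exact h₀
    | succ n ih => exact (hg _ ih).1
  exact ⟨fun n => (Nat.rec a₀ (fun _ a => g a) n : α), rfl, fun n => ⟨hP n, (hg _ (hP n)).2⟩⟩

/-- In a well-quasi-order, every set has a finite basis. -/
theorem wqo_finite_basis {α : Type*} (le : α → α → Prop) (hrefl : ∀ a, le a a)
    (h : WellQuasiOrdered le) (X : Set α) :
    ∃ B : Set α, B.Finite ∧ B ⊆ X ∧ ∀ x ∈ X, ∃ b ∈ B, le b x := by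
  by_contra hcon
  have key : ∀ t : Set α, t.Finite → ∃ c, c ∈ X ∧ ∀ b ∈ t, b ∈ X → ¬ le b c := by
    intro t ht
    by_contra hc
    push Not at hc
    apply hcon
    refine ⟨t ∩ X, ht.inter_of_left X, Set.inter_subset_right, fun x hx => ?_⟩
    obtain ⟨b, hb, hbX, hle⟩ := hc x hx
    exact ⟨b, ⟨hb, hbX⟩, hle⟩
  obtain ⟨f, hf⟩ := Set.seq_of_forall_finite_exists key
  obtain ⟨m, n, hmn, hle⟩ := h f
  exact (hf n).2 (f m) ⟨m, hmn, rfl⟩ (hf m).1 hle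

/-- The graph with sets as Eve's choices. -/
def structGame {C VS : Type u} (S : Pregraph C VS) :
    Pregraph (Option C) (VS ⊕ {A : Set VS // A.Nonempty}) where
  Edge
    | .inl t, some c, .inl t' => S.Edge t c t'
    | .inl t, none, .inr A => t ∈ A.1
    | .inr A, none, .inl t => t ∈ A.1
    | _, _, _ => False

/-- The winning strategy in the structuration game. -/
def structStrat {C VS : Type u} (S : Pregraph C VS) :
    Pregraph (Option C) (VS ⊕ {p : Set VS × VS // p.2 ∈ p.1}) where
  Edge
    | .inl t, some c, .inl t' => S.Edge t c t'
    | .inl t, none, .inr p => t = p.1.2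
    | .inr p, none, .inl t => t = p.1.2
    | _, _, _ => False

theorem lazy_path_mem {C V : Type u} (S : Pregraph C V) (hS : S.NoSinks) (W : Set (ℕ → C))
    (s : ℕ → V) (w : ℕ → Option C) (hsat : S.VertexSat W (s 0))
    (hstep : ∀ j, (w j = none ∧ s (j + 1) = s j) ∨ ∃ c, w j = some c ∧ S.Edge (s j) c (s (j + 1))) :
    w ∈ epsObjective W := by
  set F : ℕ → List C := fun k => (List.range k).filterMap w with hF
  have Fs : ∀ k, F (k + 1) = F k ++ (w k).toList := by
    intro k
    simp only [hF, List.range_succ, List.filterMap_append]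
    cases h : w k <;> simp [h]
  have Fmono : ∀ j d, F j <+: F (j + d) := by
    intro j d
    induction d with
    | zero => exact List.prefix_refl _
    | succ d ih => exact ih.trans (by rw [← add_assoc, Fs]; exact List.prefix_append _ _)
  have Fmono' : ∀ {j k}, j ≤ k → F j <+: F k := by
    intro j k h
    obtain ⟨d, rfl⟩ := Nat.exists_eq_add_of_le h
    exact Fmono j d
  have idle : ∀ j d, (∀ i, j ≤ i → i < j + d → w i = none) → s (j + d) = s j ∧ F (j + d) = F j := by
    intro j d
    induction d with
    | zero => intro _; exact ⟨rfl, rfl⟩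
    | succ d ih =>
      intro h
      have h1 := ih (fun i hi hi' => h i hi (by omega))
      have h2 := h (j + d) (by omega) (by omega)
      rcases hstep (j + d) with ⟨_, h3⟩ | ⟨c, h3, _⟩
      · refine ⟨by rw [← add_assoc, h3, h1.1], ?_⟩
        rw [← add_assoc, Fs, h2, h1.2]; simp
      · rw [h2] at h3; cases h3
  let P : V × List C → Prop := fun q => (∃ j, s j = q.1 ∧ F j = q.2) ∨ ∀ k, F k <+: q.2
  obtain ⟨f, hf0, hf⟩ := dep_choice_seq P
    (fun q q' => ∃ c, S.Edge q.1 c q'.1 ∧ q'.2 = q.2 ++ [c]) (by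
      rintro ⟨x, l⟩ hP
      have off : (∀ k, F k <+: l) →
          ∃ b, P b ∧ ∃ c, S.Edge x c b.1 ∧ b.2 = l ++ [c] := by
        intro h
        obtain ⟨c, x', hx⟩ := hS x
        exact ⟨(x', l ++ [c]), Or.inr fun k => (h k).trans (List.prefix_append _ _), c, hx, rfl⟩
      rcases hP with ⟨j, hj, hl⟩ | h
      · by_cases hex : ∃ d, w (j + d) ≠ none
        · classical
          have hmin : ∀ i, j ≤ i → i < j + Nat.find hex → w i = none := by
            intro i hi hi'
            have := Nat.find_min hex (m := i - j) (by omega)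
            rw [Nat.add_sub_cancel' hi] at this
            exact not_not.1 this
          obtain ⟨h1, h2⟩ := idle j (Nat.find hex) hmin
          have h3 := Nat.find_spec hex
          rcases hstep (j + Nat.find hex) with ⟨h4, _⟩ | ⟨c, h4, h5⟩
          · exact absurd h4 h3
          · refine ⟨(s (j + Nat.find hex + 1), l ++ [c]), Or.inl ⟨_, rfl, ?_⟩, c, ?_, rfl⟩
            · rw [Fs, h4, h2]; simp at hl; simp [hl]
            · rw [h1] at h5; simp at hj; rw [hj] at h5; exact h5
        · push Not at hex
          apply off
          intro k
          simp at hl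
          rw [← hl]
          rcases le_total k j with h | h
          · exact Fmono' h
          · obtain ⟨d, rfl⟩ := Nat.exists_eq_add_of_le h
            rw [(idle j d (fun i hi _ => by
              obtain ⟨e, rfl⟩ := Nat.exists_eq_add_of_le hi
              exact hex e)).2]
      · exact off h)
    (s 0, []) (Or.inl ⟨0, rfl, by simp [hF]⟩)
  choose γ hγ using fun n => (hf n).2
  have hlist : ∀ n, (f n).2 = (List.range n).map γ := by
    intro n
    induction n with
    | zero => simp [hf0]
    | succ n ih => rw [(hγ n).2, ih, List.range_succ]; simp
  refine ⟨γ, ?_, hsat (fun n => (f n).1) γ (by simp [hf0]) fun n => (hγ n).1⟩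
  intro k n h
  have hpre : F k <+: (List.range (F k).length).map γ := by
    rcases (hf (F k).length).1 with ⟨j, _, hj⟩ | h'
    · rw [hlist] at hj
      rw [← hj]
      have hlen : (F j).length = (F k).length := by rw [hj]; simp
      rcases le_total k j with hkj | hkj
      · exact Fmono' hkj
      · rw [(Fmono' hkj).eq_of_length hlen]
    · have := h' k
      rwa [hlist] at this
  have heq : F k = (List.range (F k).length).map γ := hpre.eq_of_length (by simp)
  have : (F k)[n]'h = ((List.range (F k).length).map γ)[n]'(by simpa using h) := by
    congr 1
  rw [List.get_eq_getElem]
  exact this.trans (by simp)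

theorem struct_eveWins {C VS : Type u} (S : Pregraph C VS) (hS : S.NoSinks) (s₀ : VS)
    (W : Set (ℕ → C)) (hsat : S.VertexSat W s₀) :
    EveWins (structGame S) (Set.range Sum.inr) (Sum.inl s₀) (epsObjective W) := by
  refine ⟨_, structStrat S,
    Sum.map id (fun p => ⟨p.1.1, ⟨p.1.2, p.2⟩⟩), Sum.inl s₀, ⟨?_, ?_, rfl, ?_⟩, ?_⟩
  · rintro (t | p)
    · obtain ⟨c, t', h⟩ := hS t
      exact ⟨some c, Sum.inl t', h⟩
    · exact ⟨none, Sum.inl p.1.2, rfl⟩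
  · rintro (t | ⟨p, hp⟩) (_ | c) (t' | ⟨p', hp'⟩) h
    all_goals first | exact h | skip
    · change t = p'.2 at h
      subst h; exact hp'
    · change t' = p.2 at h
      subst h; exact hp
  · rintro (t | A) hv (_ | c) (t' | A') h (s | p) hs
    all_goals first | exact absurd ⟨_, rfl⟩ hv | exact h.elim | cases hs | skip
    · exact ⟨Sum.inr ⟨(A'.1, _), h⟩, rfl, rfl⟩
    · exact ⟨Sum.inl t', rfl, h⟩
  · intro π γ h0 hpath
    apply lazy_path_mem S hS W (fun j => Sum.elim id (fun p => p.1.2) (π j)) γ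
    · simpa [h0] using hsat
    · intro j
      have h := hpath j
      revert h
      rcases π j with t | p <;> rcases γ j with _ | c <;> rcases π (j + 1) with t' | p' <;> intro h
      all_goals first | exact h.elim | skip
      · exact Or.inl ⟨rfl, h.symm⟩
      · exact Or.inr ⟨c, rfl, h⟩
      · exact Or.inl ⟨rfl, h⟩

/-- Paths of exactly `k` ε-edges. -/
def epsN {C V : Type u} (G : Pregraph (Option C) V) : ℕ → V → V → Prop
  | 0, a, b => a = b
  | k + 1, a, b => ∃ z, G.Edge a none z ∧ epsN G k z b

/-- ε-reachability. -/
def epsR {C V : Type u} (G : Pregraph (Option C) V) (a b : V) : Prop := ∃ k, epsN G k a b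

theorem epsR_refl {C V : Type u} (G : Pregraph (Option C) V) (a : V) : epsR G a a := ⟨0, rfl⟩

theorem epsR_trans {C V : Type u} (G : Pregraph (Option C) V) {a b c : V}
    (h : epsR G a b) (h' : epsR G b c) : epsR G a c := by
  obtain ⟨k, hk⟩ := h
  induction k generalizing a with
  | zero => cases hk; exact h'
  | succ k ih =>
    obtain ⟨a', h1, h2⟩ := hk
    obtain ⟨l, hl⟩ := ih h2
    exact ⟨l + 1, a', h1, hl⟩

theorem epsR_saturated_mem {C V : Type u} (G : Pregraph (Option C) V) (W : Set (ℕ → C))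
    (π : ℕ → V) (γ : ℕ → C) (hsat : G.VertexSat (epsObjective W) (π 0))
    (h : ∀ i, ∃ a b, epsR G (π i) a ∧ G.Edge a (some (γ i)) b ∧ epsR G b (π (i + 1))) :
    γ ∈ W := by
  let P : V × ℕ × ℕ → Prop := fun q => ∃ a b, epsN G q.2.2 q.1 a ∧
    G.Edge a (some (γ q.2.1)) b ∧ epsR G b (π (q.2.1 + 1))
  have hinit : ∃ k, P (π 0, 0, k) := by
    obtain ⟨a, b, ⟨k, hk⟩, h1, h2⟩ := h 0
    exact ⟨k, a, b, hk, h1, h2⟩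
  obtain ⟨k₀, hk₀⟩ := hinit
  obtain ⟨f, hf0, hf⟩ := dep_choice_seq P
    (fun q q' => ∃ c, G.Edge q.1 c q'.1 ∧ ((c = none ∧ q'.2.1 = q.2.1 ∧ q'.2.2 < q.2.2) ∨
      (c = some (γ q.2.1) ∧ q'.2.1 = q.2.1 + 1))) (by
      rintro ⟨x, i, k⟩ ⟨a, b, h1, h2, h3⟩
      cases k with
      | zero =>
        cases h1
        obtain ⟨a', b', h4, h5, h6⟩ := h (i + 1)
        obtain ⟨k, hk⟩ := epsR_trans G h3 h4
        exact ⟨(b, i + 1, k), ⟨a', b', hk, h5, h6⟩, _, h2, Or.inr ⟨rfl, rfl⟩⟩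
      | succ k =>
        obtain ⟨x', h4, h5⟩ := h1
        exact ⟨(x', i, k), ⟨a, b, h5, h2, h3⟩, _, h4, Or.inl ⟨rfl, rfl, Nat.lt_succ_self k⟩⟩)
    (π 0, 0, k₀) hk₀
  choose w hw using fun n => (hf n).2
  have hlist : ∀ j, (List.range j).filterMap w = (List.range (f j).2.1).map γ := by
    intro j
    induction j with
    | zero => simp [hf0]
    | succ j ih =>
      rw [List.range_succ, List.filterMap_append, ih]
      rcases (hw j).2 with ⟨h1, h2, _⟩ | ⟨h1, h2⟩
      · rw [h2]; simp [h1]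
      · rw [h2, List.range_succ]; simp [h1]
  have hprog : ∀ k j, (f j).2.2 = k → ∃ j', (f j').2.1 = (f j).2.1 + 1 := by
    intro k
    induction k using Nat.strong_induction_on with
    | _ k ih =>
      intro j hj
      rcases (hw j).2 with ⟨_, h2, h3⟩ | ⟨_, h2⟩
      · obtain ⟨j', hj'⟩ := ih _ (hj ▸ h3) (j + 1) rfl
        exact ⟨j', by rw [hj', h2]⟩
      · exact ⟨j + 1, h2⟩
  have hunb : ∀ n, ∃ j, (f j).2.1 = n := by
    intro n
    induction n with
    | zero => exact ⟨0, by simp [hf0]⟩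
    | succ n ih =>
      obtain ⟨j, hj⟩ := ih
      obtain ⟨j', hj'⟩ := hprog _ j rfl
      exact ⟨j', by rw [hj', hj]⟩
  obtain ⟨w', hw', hW⟩ := hsat (fun n => (f n).1) w (by simp [hf0]) fun n => (hw n).1
  have : w' = γ := by
    funext n
    obtain ⟨j, hj⟩ := hunb (n + 1)
    have hlen : n < ((List.range j).filterMap w).length := by rw [hlist, hj]; simp
    rw [← hw' j n hlen, List.get_eq_getElem]
    simp only [hlist, hj]
    simp
  rwa [← this]

/-- From finite ε-memory to a simulating monotone well-quasi-order. -/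
theorem exists_wqo_simulation {C VS : Type u} (S : Pregraph C VS) (hS : S.NoSinks) (s₀ : VS)
    (W : Set (ℕ → C)) (hsat : S.VertexSat W s₀) (n : ℕ) (hmem : ObjEpsMemLE W (n : Cardinal.{u})) :
    ∃ (VU : Type u) (le : VU → VU → Prop) (U : Pregraph C VU) (R : VS → VU → Prop) (u₀ : VU),
      IsPreorder VU le ∧ WellQuasiOrdered le ∧ U.MonotoneRel le ∧
      (∀ s u c s', R s u → S.Edge s c s' → ∃ u', R s' u' ∧ U.Edge u c u') ∧
      R s₀ u₀ ∧ U.VertexSat W u₀ := by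
  have hns : (structGame S).NoSinks := by
    rintro (t | A)
    · obtain ⟨c, t', h⟩ := hS t
      exact ⟨some c, Sum.inl t', h⟩
    · obtain ⟨t, ht⟩ := A.2
      exact ⟨none, Sum.inl t, ht⟩
  obtain ⟨M, D, Q, q₀, hM, ⟨⟨hQns, hQmor, hq₀, hadam⟩, heps⟩, hQsat⟩ :=
    hmem _ (structGame S) hns _ _ (struct_eveWins S hS s₀ W hsat)
  have : Finite M := Cardinal.lt_aleph0_iff_finite.1 (hM.trans_lt (Cardinal.natCast_lt_aleph0))
  let VU : Type u := {p : VS × M // ((Sum.inl p.1, p.2) : (VS ⊕ {A : Set VS // A.Nonempty}) × M) ∈ D}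
  let emb : VU → D := fun p => ⟨(Sum.inl p.1.1, p.1.2), p.2⟩
  have hinl : ∀ t : VS, (Sum.inl t : VS ⊕ {A : Set VS // A.Nonempty}) ∉ Set.range Sum.inr := by
    rintro t ⟨_, h⟩; cases h
  -- every nonempty set of vertices with the same memory has a minimum
  have hmin : ∀ (m : M) (A : Set VU), A.Nonempty → (∀ p ∈ A, p.1.2 = m) →
      ∃ p ∈ A, ∀ q ∈ A, epsR Q (emb q) (emb p) := by
    intro m A hA hAm
    let A' : Set VS := (fun p : VU => p.1.1) '' A
    have hA' : A'.Nonempty := hA.image _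
    have hto : ∀ q ∈ A, ∃ d : D, d.1 = (Sum.inr ⟨A', hA'⟩, m) ∧ Q.Edge (emb q) none d := by
      intro q hq
      obtain ⟨d, hd1, hd2⟩ := hadam (Sum.inl q.1.1) (hinl _) none (Sum.inr ⟨A', hA'⟩)
        (show q.1.1 ∈ A' from ⟨q, hq, rfl⟩) (emb q) rfl
      refine ⟨d, Prod.ext hd1 ?_, hd2⟩
      rw [← heps _ _ hd2]
      exact hAm q hq
    obtain ⟨q₁, hq₁⟩ := hA
    obtain ⟨d, hd, _⟩ := hto q₁ hq₁
    obtain ⟨c, e, he⟩ := hQns d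
    have hmor := hQmor he
    have hee : ∃ p ∈ A, e = emb p ∧ c = none := by
      obtain ⟨⟨e1, e2⟩, heD⟩ := e
      simp only [hd] at hmor
      rcases c with _ | c <;> rcases e1 with t | B
      all_goals first | exact hmor.elim | skip
      obtain ⟨p, hp, rfl⟩ := (show t ∈ A' from hmor)
      have hm := heps _ _ he
      rw [hd] at hm
      refine ⟨p, hp, ?_, rfl⟩
      apply Subtype.ext
      exact Prod.ext rfl (hm.symm.trans (hAm p hp).symm)
    obtain ⟨p, hp, rfl, rfl⟩ := hee
    refine ⟨p, hp, fun q hq => ?_⟩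
    obtain ⟨d', hd', hedge⟩ := hto q hq
    have : d' = d := Subtype.ext (hd'.trans hd.symm)
    subst this
    exact ⟨2, d', hedge, emb p, he, rfl⟩
  have hs₀ : ∃ u₀ : VU, u₀.1.1 = s₀ ∧ emb u₀ = q₀ := by
    obtain ⟨⟨x, m⟩, hD⟩ := q₀
    cases hq₀
    exact ⟨⟨(s₀, m), hD⟩, rfl, rfl⟩
  obtain ⟨u₀, hu₀, hu₀'⟩ := hs₀
  refine ⟨VU, fun p q => epsR Q (emb q) (emb p),
    ⟨fun p c q => ∃ a b, epsR Q (emb p) a ∧ Q.Edge a (some c) b ∧ epsR Q b (emb q)⟩,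
    fun s p => p.1.1 = s, u₀, ?_, ?_, ?_, ?_, hu₀, ?_⟩
  · exact { refl := fun p => epsR_refl Q _, trans := fun p q r h h' => epsR_trans Q h' h }
  · intro f
    obtain ⟨m, hm⟩ := Finite.exists_infinite_fiber (fun n => (f n).1.2)
    have hinf : ((fun n => (f n).1.2) ⁻¹' {m}).Infinite := Set.infinite_coe_iff.1 hm
    obtain ⟨p, ⟨i, hi, rfl⟩, hp⟩ := hmin m (f '' ((fun n => (f n).1.2) ⁻¹' {m}))
      (hinf.nonempty.image f) (by rintro _ ⟨i, hi, rfl⟩; exact hi)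
    obtain ⟨j, hj, hij⟩ := hinf.exists_gt i
    exact ⟨i, j, hij, hp _ ⟨j, hj, rfl⟩⟩
  · rintro u v c v' u' h1 ⟨a, b, h2, h3, h4⟩ h5
    exact ⟨a, b, epsR_trans Q h1 h2, h3, epsR_trans Q h4 h5⟩
  · rintro s p c s' rfl hedge
    obtain ⟨⟨⟨x, m⟩, hD⟩, hd1, hd2⟩ := hadam (Sum.inl p.1.1) (hinl _) (some c) (Sum.inl s')
      hedge (emb p) rfl
    cases hd1
    exact ⟨⟨(s', m), hD⟩, rfl, _, _, epsR_refl Q _, hd2, epsR_refl Q _⟩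
  · intro π γ h0 hpath
    refine epsR_saturated_mem Q W (fun i => emb (π i)) γ ?_ hpath
    simpa [h0, hu₀'] using hQsat

/-- From a simulating monotone wqo to a locally finite strategy. -/
theorem locallyFinite_of_simulation {C V VS VU : Type u} (G : Pregraph C V)
    (VEve : Set V) (v₀ : V) (S : Pregraph C VS) (πS : VS → V) (s₀ : VS) (W : Set (ℕ → C))
    (hstr : IsStrategy G VEve v₀ S πS s₀) (le : VU → VU → Prop) (U : Pregraph C VU)
    (R : VS → VU → Prop) (u₀ : VU) (hrefl : ∀ u, le u u) (hwqo : WellQuasiOrdered le)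
    (hmono : U.MonotoneRel le)
    (hsim : ∀ s u c s', R s u → S.Edge s c s' → ∃ u', R s' u' ∧ U.Edge u c u')
    (hR₀ : R s₀ u₀) (hsat : U.VertexSat W u₀) :
    ∃ (VS : Type u) (S : Pregraph C VS) (πS : VS → V) (s₀ : VS),
      IsStrategy G VEve v₀ S πS s₀ ∧ (∀ v : V, #(↥(πS ⁻¹' {v})) < ℵ₀) ∧
      S.VertexSat W s₀ := by
  obtain ⟨hns, hmor, hinit, hadam⟩ := hstr
  choose B hBfin hBsub hB using fun v => wqo_finite_basis le hrefl hwqo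
    {u | ∃ s, πS s = v ∧ R s u}
  have move : ∀ s u c s', R s u → S.Edge s c s' → ∃ u' ∈ B (πS s'), U.Edge u c u' := by
    intro s u c s' hR hE
    obtain ⟨u', hR', hU⟩ := hsim s u c s' hR hE
    obtain ⟨b, hb, hle⟩ := hB (πS s') u' ⟨s', rfl, hR'⟩
    exact ⟨b, hb, hmono (hrefl u) hU hle⟩
  obtain ⟨b₀, hb₀, hle₀⟩ := hB v₀ u₀ ⟨s₀, hinit, hR₀⟩
  refine ⟨{p : V × VU // p.2 ∈ B p.1},
    ⟨fun p c q => G.Edge p.1.1 c q.1.1 ∧ U.Edge p.1.2 c q.1.2⟩, fun p => p.1.1,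
    ⟨(v₀, b₀), hb₀⟩, ⟨?_, fun _ _ _ h => h.1, rfl, ?_⟩, ?_, ?_⟩
  · rintro ⟨⟨v, u⟩, hu⟩
    obtain ⟨s, rfl, hR⟩ := hBsub v hu
    obtain ⟨c, s', hE⟩ := hns s
    obtain ⟨u', hu', hU⟩ := move s u c s' hR hE
    exact ⟨c, ⟨(πS s', u'), hu'⟩, hmor hE, hU⟩
  · rintro _ hv c v' hE ⟨⟨v, u⟩, hu⟩ rfl
    obtain ⟨s, hs, hR⟩ := hBsub v hu
    obtain ⟨s', rfl, hE'⟩ := hadam v hv c v' hE s hs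
    obtain ⟨u', hu', hU⟩ := move s u c s' hR hE'
    exact ⟨⟨(πS s', u'), hu'⟩, rfl, hE, hU⟩
  · intro v
    rw [Cardinal.lt_aleph0_iff_finite]
    have := (hBfin v).to_subtype
    refine Finite.of_injective (β := B v)
      (fun p => ⟨p.1.1.2, by
        have h1 := p.1.2
        have h2 : p.1.1.1 = v := p.2
        rwa [h2] at h1⟩) ?_
    rintro ⟨⟨⟨v1, u1⟩, h1⟩, rfl⟩ ⟨⟨⟨v2, u2⟩, h2⟩, h3⟩ h
    cases h3
    cases h
    rfl
  · intro π γ h0 hpath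
    refine hsat (fun i => match i with | 0 => u₀ | i + 1 => (π (i + 1)).1.2) γ rfl ?_
    intro i
    cases i with
    | zero =>
      have h1 := (hpath 0).2
      rw [h0] at h1
      exact hmono hle₀ h1 (hrefl _)
    | succ i => exact (hpath (i + 1)).2

theorem wqo_of_antichains {V : Type u} (le : V → V → Prop) (hpo : IsPartialOrder V le)
    (hwf : WellFounded (strictOf le)) (hac : ∀ A : Set V, IsAntichain le A → A.Finite) :
    WellQuasiOrdered le := by
  let _ : PartialOrder V :=
    { le := le
      le_refl := hpo.refl
      le_trans := hpo.trans
      le_antisymm := hpo.antisymm }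
  have h : WellQuasiOrderedLE V := wellQuasiOrderedLE_iff.2 ⟨⟨by
    refine Subrelation.wf (r := strictOf le) ?_ hwf
    intro a b hab
    exact ⟨hab.le, hab.ne⟩⟩, hac⟩
  exact h.wqo

/-- Product of two pregraphs. -/
def prodGraph {C V₁ V₂ : Type u} (U₁ : Pregraph C V₁) (U₂ : Pregraph C V₂) :
    Pregraph C (V₁ × V₂) :=
  ⟨fun p c q => U₁.Edge p.1 c q.1 ∧ U₂.Edge p.2 c q.2⟩

theorem prodGraph_mono {C V₁ V₂ : Type u} {U₁ : Pregraph C V₁} {U₂ : Pregraph C V₂}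
    {le₁ : V₁ → V₁ → Prop} {le₂ : V₂ → V₂ → Prop}
    (h₁ : U₁.MonotoneRel le₁) (h₂ : U₂.MonotoneRel le₂) :
    (prodGraph U₁ U₂).MonotoneRel (fun a b => le₁ a.1 b.1 ∧ le₂ a.2 b.2) :=
  fun _ _ _ _ _ h e h' => ⟨h₁ h.1 e.1 h'.1, h₂ h.2 e.2 h'.2⟩

theorem prodGraph_sat {C V₁ V₂ : Type u} {U₁ : Pregraph C V₁} {U₂ : Pregraph C V₂}
    {W₁ W₂ : Set (ℕ → C)} {u₁ : V₁} {u₂ : V₂}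
    (h₁ : U₁.VertexSat W₁ u₁) (h₂ : U₂.VertexSat W₂ u₂) :
    (prodGraph U₁ U₂).VertexSat (W₁ ∩ W₂) (u₁, u₂) :=
  fun π γ h0 hp =>
    ⟨h₁ (fun i => (π i).1) γ (by simp [h0]) fun i => (hp i).1,
     h₂ (fun i => (π i).2) γ (by simp [h0]) fun i => (hp i).2⟩

/-- Objectives admitting universal monotone wqo's are closed under
intersection; in particular the intersection of two objectives with finite ε-memory has
locally finite memory. -/
theorem wqo_universal_intersection
    {C : Type u} (W₁ W₂ : Set (ℕ → C)) :
    (HasWqoUniversal W₁ → HasWqoUniversal W₂ → HasWqoUniversal (W₁ ∩ W₂)) ∧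
    ((∃ n₁ : ℕ, ObjEpsMemLE W₁ (n₁ : Cardinal.{u})) →
     (∃ n₂ : ℕ, ObjEpsMemLE W₂ (n₂ : Cardinal.{u})) →
     LocallyFiniteMemory (W₁ ∩ W₂)) := by
  constructor
  · intro H₁ H₂ κ
    obtain ⟨V₁, le₁, U₁, hpo₁, hwf₁, hm₁, hac₁, hu₁⟩ := H₁ κ
    obtain ⟨V₂, le₂, U₂, hpo₂, hwf₂, hm₂, hac₂, hu₂⟩ := H₂ κ
    have hw := (wqo_of_antichains le₁ hpo₁ hwf₁ hac₁).prod (wqo_of_antichains le₂ hpo₂ hwf₂ hac₂)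
    have hpo : IsPartialOrder (V₁ × V₂) (fun a b => le₁ a.1 b.1 ∧ le₂ a.2 b.2) :=
      { refl := fun a => ⟨hpo₁.refl _, hpo₂.refl _⟩
        trans := fun a b c h h' => ⟨hpo₁.trans _ _ _ h.1 h'.1, hpo₂.trans _ _ _ h.2 h'.2⟩
        antisymm := fun a b h h' =>
          Prod.ext (hpo₁.antisymm _ _ h.1 h'.1) (hpo₂.antisymm _ _ h.2 h'.2) }
    refine ⟨V₁ × V₂, _, prodGraph U₁ U₂, hpo, ?_, prodGraph_mono hm₁ hm₂,
      fun A hA => hA.finite_of_wellQuasiOrdered hw, ?_⟩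
    · refine Subrelation.wf ?_ hw.wellFounded
      intro a b hab
      exact ⟨hab.1, fun h => hab.2 (hpo.antisymm _ _ hab.1 h)⟩
    · intro VT T t₀ hT hκ
      obtain ⟨φ₁, hφ₁, hs₁⟩ := hu₁ VT T t₀ hT hκ
      obtain ⟨φ₂, hφ₂, hs₂⟩ := hu₂ VT T t₀ hT hκ
      exact ⟨fun t => (φ₁ t, φ₂ t), fun _ _ _ h => ⟨hφ₁ h, hφ₂ h⟩, fun h =>
        prodGraph_sat (hs₁ fun π γ h0 hp => (h π γ h0 hp).1)
          (hs₂ fun π γ h0 hp => (h π γ h0 hp).2)⟩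
  · rintro ⟨n₁, H₁⟩ ⟨n₂, H₂⟩ V G hG VEve v₀ ⟨VS, S, πS, s₀, hstr, hsat⟩
    obtain ⟨V₁, le₁, U₁, R₁, u₁, hpo₁, hw₁, hm₁, hsim₁, hR₁, hs₁⟩ :=
      exists_wqo_simulation S hstr.1 s₀ W₁ (fun π γ h0 hp => (hsat π γ h0 hp).1) n₁ H₁
    obtain ⟨V₂, le₂, U₂, R₂, u₂, hpo₂, hw₂, hm₂, hsim₂, hR₂, hs₂⟩ :=
      exists_wqo_simulation S hstr.1 s₀ W₂ (fun π γ h0 hp => (hsat π γ h0 hp).2) n₂ H₂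
    refine locallyFinite_of_simulation G VEve v₀ S πS s₀ (W₁ ∩ W₂) hstr
      (fun a b => le₁ a.1 b.1 ∧ le₂ a.2 b.2) (prodGraph U₁ U₂)
      (fun s p => R₁ s p.1 ∧ R₂ s p.2) (u₁, u₂)
      (fun u => ⟨hpo₁.refl _, hpo₂.refl _⟩) (hw₁.prod hw₂) (prodGraph_mono hm₁ hm₂)
      ?_ ⟨hR₁, hR₂⟩ (prodGraph_sat hs₁ hs₂)
    intro s u c s' hR hE
    obtain ⟨a, ha, hae⟩ := hsim₁ s u.1 c s' hR.1 hE
    obtain ⟨b, hb, hbe⟩ := hsim₂ s u.2 c s' hR.2 hE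
    exact ⟨(a, b), ⟨ha, hb⟩, hae, hbe⟩
end

section
/- Let m ∈ ℕ and let (W_i)_{i∈ℕ} be a countable family of prefix-independent Σ⁰₂ objectives over a set of colours C, each with ε-memory ≤ m. Then their union W = ∪_{i∈ℕ} W_i is a prefix-independent Σ⁰₂ objective with ε-memory ≤ m. In other words, prefix-independent Σ⁰₂ objectives with ε-memory ≤ m are closed under countable unions. -/
universe u v

open Cardinal

/-- Prepending a finite word to an infinite word. -/
def listAppend {C : Type u} (u : List C) (w : ℕ → C) : ℕ → C :=
  fun n => if h : n < u.length then u.get ⟨n, h⟩ else w (n - u.length)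

/-- An objective is prefix-independent when it is invariant under adding/removing
finite prefixes. -/
def PrefixIndependent {C : Type u} (W : Set (ℕ → C)) : Prop :=
  ∀ (u : List C) (w : ℕ → C), listAppend u w ∈ W ↔ w ∈ W

/-- The prefix of length `k` of an infinite word. -/
def prefixWord {C : Type u} (w : ℕ → C) (k : ℕ) : List C :=
  List.ofFn (fun i : Fin k => w i)

/-- Σ⁰₂ objectives: those of the form "only finitely many prefixes belong to `L`". -/
def IsSigmaTwo {C : Type u} (W : Set (ℕ → C)) : Prop :=
  ∃ L : Set (List C), W = {w | {k | prefixWord w k ∈ L}.Finite}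

section Aux

open Relation

theorem aux_extend {Q : Type*} {Step : Q → Q → Prop} {q q' : Q} (h : TransGen Step q q')
    (n : ℕ) (f : ℕ → Q) (hf : ∀ i < n, Step (f i) (f (i + 1))) (hn : f n = q) :
    ∃ (n' : ℕ) (f' : ℕ → Q), n < n' ∧ (∀ i ≤ n, f' i = f i) ∧ f' n' = q' ∧
      ∀ i < n', Step (f' i) (f' (i + 1)) := by
  induction h with
  | @single b hb =>
    refine ⟨n + 1, Function.update f (n + 1) b, by omega, ?_, by simp, ?_⟩
    · intro i hi
      rw [Function.update_of_ne (by omega)]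
    · intro i hi
      rw [Function.update_of_ne (by omega)]
      rcases Nat.lt_succ_iff_lt_or_eq.mp hi with h1 | h1
      · rw [Function.update_of_ne (by omega)]; exact hf i h1
      · subst h1; rw [Function.update_self, hn]; exact hb
  | @tail b c _ hc ih =>
    obtain ⟨n1, f1, h1, h2, h3, h4⟩ := ih
    refine ⟨n1 + 1, Function.update f1 (n1 + 1) c, by omega, ?_, by simp, ?_⟩
    · intro i hi
      rw [Function.update_of_ne (by omega)]; exact h2 i hi
    · intro i hi
      rw [Function.update_of_ne (by omega)]
      rcases Nat.lt_succ_iff_lt_or_eq.mp hi with h5 | h5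
      · rw [Function.update_of_ne (by omega)]; exact h4 i h5
      · subst h5; rw [Function.update_self, h3]; exact hc

theorem aux_weave {Q : Type*} (Step : Q → Q → Prop) (Tgt : ℕ → Q → Q → Prop) (q0 : Q)
    (h : ∀ j q, ∃ q', TransGen Step q q' ∧ Tgt j q q') :
    ∃ (f : ℕ → Q) (n : ℕ → ℕ), f 0 = q0 ∧ (∀ i, Step (f i) (f (i + 1))) ∧ StrictMono n ∧
      ∀ j, Tgt j (f (n j)) (f (n (j + 1))) := by
  let A := {p : ℕ × (ℕ → Q) // p.2 0 = q0 ∧ ∀ i < p.1, Step (p.2 i) (p.2 (i + 1))}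
  have key : ∀ (j : ℕ) (p : A), ∃ p' : A, p.1.1 < p'.1.1 ∧ (∀ i ≤ p.1.1, p'.1.2 i = p.1.2 i) ∧
      Tgt j (p.1.2 p.1.1) (p'.1.2 p'.1.1) := by
    rintro j ⟨⟨n, f⟩, h0, hf⟩
    obtain ⟨q', hq, ht⟩ := h j (f n)
    obtain ⟨n', f', h1, h2, h3, h4⟩ := aux_extend hq n f hf rfl
    refine ⟨⟨⟨n', f'⟩, ?_, h4⟩, h1, h2, ?_⟩
    · simp only; rw [h2 0 (Nat.zero_le _)]; exact h0
    · simp only; rw [h3]; exact ht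
  choose nx hnx using key
  let a : ℕ → A := fun j => Nat.rec ⟨⟨0, fun _ => q0⟩, rfl, fun i hi => absurd hi (by simp)⟩ nx j
  have ha : ∀ j, a (j + 1) = nx j (a j) := fun j => rfl
  have hmono : StrictMono (fun j => (a j).1.1) := by
    apply strictMono_nat_of_lt_succ
    intro j
    rw [ha]; exact (hnx j (a j)).1
  have hle : ∀ j, j ≤ (a j).1.1 := fun j => hmono.id_le j
  have hag : ∀ j d i, i ≤ (a j).1.1 → (a (j + d)).1.2 i = (a j).1.2 i := by
    intro j d
    induction d with
    | zero => intro i _; rfl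
    | succ d ih =>
      intro i hi
      rw [← ih i hi, ← add_assoc, ha]
      exact (hnx (j + d) (a (j + d))).2.1 i
        (hi.trans (hmono.monotone (Nat.le_add_right j d)))
  have hag' : ∀ j i, i ≤ (a j).1.1 → (a i).1.2 i = (a j).1.2 i := by
    intro j i hi
    rcases le_total i j with h1 | h1
    · obtain ⟨d, rfl⟩ := Nat.exists_eq_add_of_le h1
      exact (hag i d i (hle i)).symm
    · obtain ⟨d, rfl⟩ := Nat.exists_eq_add_of_le h1
      exact hag j d _ hi
  refine ⟨fun i => (a i).1.2 i, fun j => (a j).1.1, rfl, ?_, hmono, ?_⟩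
  · intro i
    have h1 := hle (i + 1)
    simp only
    rw [hag' (i + 1) i (by omega)]
    exact (a (i + 1)).2.2 i (by omega)
  · intro j
    simp only
    rw [hag' j _ le_rfl, hag' (j + 1) _ le_rfl, ha]
    exact (hnx j (a j)).2.2

/-- A step of `S` on colour `c`, preceded by any number of ε-steps. -/
def Lft {C V : Type u} (S : Pregraph (Option C) V) (s : V) (c : C) (s' : V) : Prop :=
  ∃ a, ReflTransGen (fun x y => S.Edge x none y) s a ∧ S.Edge a (some c) s'

theorem aux_completion_of_counter {C : Type u} (w : ℕ → Option C) (γ : ℕ → C) (j : ℕ → ℕ)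
    (h0 : j 0 = 0)
    (h : ∀ i, (w i = none ∧ j (i + 1) = j i) ∨ (w i = some (γ (j i)) ∧ j (i + 1) = j i + 1)) :
    ∀ k, (List.range k).filterMap w = (List.range (j k)).map γ := by
  intro k
  induction k with
  | zero => simp [h0]
  | succ k ih =>
    rw [List.range_succ, List.filterMap_append, ih]
    rcases h k with ⟨h1, h2⟩ | ⟨h1, h2⟩
    · simp [h1, h2]
    · simp [h1, h2, List.range_succ]

theorem lft_path {C V : Type u} {S : Pregraph (Option C) V} {W : Set (ℕ → C)} {s : V}
    (hs : S.VertexSat (epsObjective W) s) (π : ℕ → V) (γ : ℕ → C) (h0 : π 0 = s)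
    (h : ∀ i, Lft S (π i) (γ i) (π (i + 1))) : γ ∈ W := by
  let Q := {q : ℕ × V // Lft S q.2 (γ q.1) (π (q.1 + 1))}
  let Step : Q → Q → Prop := fun q q' =>
    (q'.1.1 = q.1.1 ∧ S.Edge q.1.2 none q'.1.2) ∨
    (q'.1.1 = q.1.1 + 1 ∧ S.Edge q.1.2 (some (γ q.1.1)) q'.1.2)
  have key : ∀ (j : ℕ) (b : V), S.Edge b (some (γ j)) (π (j + 1)) → ∀ a,
      ReflTransGen (fun x y => S.Edge x none y) a b → ∀ ha : Lft S a (γ j) (π (j + 1)),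
      TransGen Step ⟨(j, a), ha⟩ ⟨(j + 1, π (j + 1)), h (j + 1)⟩ := by
    intro j b hb a hab
    induction hab using ReflTransGen.head_induction_on with
    | refl =>
      intro ha
      exact TransGen.single (Or.inr ⟨rfl, hb⟩)
    | head h1 h2 ih =>
      intro ha
      exact TransGen.head (b := ⟨(j, _), ⟨b, h2, hb⟩⟩) (Or.inl ⟨rfl, h1⟩) (ih _)
  obtain ⟨f, n, hf0, hf, hn, ht⟩ := aux_weave Step (fun _ q q' => q'.1.1 = q.1.1 + 1)
    ⟨(0, π 0), h 0⟩ (by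
      rintro - ⟨⟨j, a⟩, ha⟩
      obtain ⟨b, hab, hb⟩ := ha
      exact ⟨_, key j b hb a hab _, rfl⟩)
  classical
  let w : ℕ → Option C := fun i =>
    if (f (i + 1)).1.1 = (f i).1.1 then none else some (γ (f i).1.1)
  have hstep : ∀ i, S.Edge (f i).1.2 (w i) (f (i + 1)).1.2 ∧
      ((w i = none ∧ (f (i + 1)).1.1 = (f i).1.1) ∨
      (w i = some (γ (f i).1.1) ∧ (f (i + 1)).1.1 = (f i).1.1 + 1)) := by
    intro i
    rcases hf i with ⟨h1, h2⟩ | ⟨h1, h2⟩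
    · have : w i = none := by simp [w, h1]
      rw [this]; exact ⟨h2, Or.inl ⟨rfl, h1⟩⟩
    · have : w i = some (γ (f i).1.1) := by simp [w, h1]
      rw [this]; exact ⟨h2, Or.inr ⟨rfl, h1⟩⟩
  have hw : w ∈ epsObjective W := by
    apply hs (fun i => (f i).1.2) w
    · simp [hf0, h0]
    · intro i; exact (hstep i).1
  obtain ⟨w', hc, hw'⟩ := hw
  have hproj := aux_completion_of_counter w γ (fun i => (f i).1.1) (by simp [hf0])
    (fun i => (hstep i).2)
  have hbig : ∀ j, j ≤ (f (n j)).1.1 := by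
    intro j
    induction j with
    | zero => exact Nat.zero_le _
    | succ j ih => have := ht j; omega
  have : γ = w' := by
    funext i
    have hl : i < ((List.range (n (i + 1))).filterMap w).length := by
      rw [hproj]; simp; have := hbig (i + 1); omega
    have := hc (n (i + 1)) i hl
    rw [← this]
    simp [hproj]
  rw [this]; exact hw'

theorem listAppend_zero {C : Type u} (u : List C) (w : ℕ → C) (i : ℕ) (h : i < u.length) :
    listAppend u w i = u[i] := by simp [listAppend, h]

theorem aux_tail {C : Type u} {W : Set (ℕ → C)} (hW : PrefixIndependent W) (w : ℕ → C) (n : ℕ) :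
    (fun i => w (i + n)) ∈ W ↔ w ∈ W := by
  rw [← hW ((List.range n).map w) (fun i => w (i + n))]
  have : listAppend ((List.range n).map w) (fun i => w (i + n)) = w := by
    funext i
    unfold listAppend
    split_ifs with h
    · simp
    · simp at h ⊢; congr 1; omega
  rw [this]

theorem aux_range_succ_filterMap {C : Type u} (w : ℕ → Option C) (k : ℕ) :
    (List.range (k + 1)).filterMap w =
      (w 0).toList ++ (List.range k).filterMap (fun i => w (i + 1)) := by
  rw [List.range_succ_eq_map, List.filterMap_cons]
  cases h : w 0 <;> simp [List.filterMap_map]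

theorem epsObjective_tail {C : Type u} {W : Set (ℕ → C)} (hW : PrefixIndependent W)
    (w : ℕ → Option C) (h : w ∈ epsObjective W) : (fun i => w (i + 1)) ∈ epsObjective W := by
  obtain ⟨w', hc, hw'⟩ := h
  cases h0 : w 0 with
  | none =>
    refine ⟨w', ?_, hw'⟩
    intro k n hn
    have h1 := aux_range_succ_filterMap w k
    simp [h0] at h1
    have h2 := hc (k + 1) n (by rw [h1]; exact hn)
    rw [← h2]
    simp [h1]
  | some c =>
    refine ⟨fun i => w' (i + 1), ?_, (aux_tail hW w' 1).2 hw'⟩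
    intro k n hn
    have h1 := aux_range_succ_filterMap w k
    simp [h0] at h1
    have h2 := hc (k + 1) (n + 1) (by rw [h1]; simpa using hn)
    simp only
    rw [← h2]
    simp [h1]

/-- Reachability. -/
def Reach {C V : Type u} (S : Pregraph C V) : V → V → Prop :=
  ReflTransGen (fun x y => ∃ c, S.Edge x c y)

theorem vertexSat_reach {C V : Type u} {S : Pregraph (Option C) V} {W : Set (ℕ → C)}
    (hW : PrefixIndependent W) {s s' : V} (hs : S.VertexSat (epsObjective W) s)
    (h : Reach S s s') : S.VertexSat (epsObjective W) s' := by
  induction h with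
  | refl => exact hs
  | @tail b c _ hc ih =>
    obtain ⟨o, ho⟩ := hc
    intro π γ h0 hp
    have := ih (fun i => Nat.casesOn i b π) (fun i => Nat.casesOn i o γ) rfl (by
      intro i
      cases i with
      | zero => simpa [h0] using ho
      | succ i => exact hp i)
    exact epsObjective_tail hW _ this

theorem eps_mem {C : Type u} {W : Set (ℕ → C)} (hW : PrefixIndependent W) (hne : W.Nonempty)
    {Y : Type*} (Eps : Y → Y → Prop) (E : Y → C → Y → Prop)
    (hrefl : ∀ y, Eps y y) (htrans : ∀ x y z, Eps x y → Eps y z → Eps x z)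
    (habs : ∀ x c y z, E x c y → Eps y z → E x c z)
    (w : ℕ → Option C) (σ : ℕ → Y)
    (hnone : ∀ i, w i = none → Eps (σ i) (σ (i + 1)))
    (hsome : ∀ i c, w i = some c → E (σ i) c (σ (i + 1)))
    (hsat : ∀ (y : ℕ → Y) (γ : ℕ → C), Eps (σ 0) (y 0) → (∀ i, E (y i) (γ i) (y (i + 1))) → γ ∈ W) :
    w ∈ epsObjective W := by
  classical
  have heps : ∀ a d, (∀ i, a ≤ i → i < a + d → w i = none) → Eps (σ a) (σ (a + d)) := by
    intro a d
    induction d with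
    | zero => intro _; exact hrefl _
    | succ d ih =>
      intro h
      exact htrans _ _ _ (ih (fun i h1 h2 => h i h1 (by omega)))
        (hnone _ (h (a + d) (by omega) (by omega)))
  let p : ℕ → Prop := fun i => w i ≠ none
  by_cases hinf : (Set.ofPred p).Infinite
  · obtain ⟨x, hx⟩ := hne
    let γ : ℕ → C := fun j => (w (Nat.nth p j)).getD (x 0)
    have hp : ∀ j, p (Nat.nth p j) := fun j => Nat.nth_mem_of_infinite hinf j
    have hγ : ∀ j, w (Nat.nth p j) = some (γ j) := by
      intro j
      have := hp j
      simp only [γ]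
      cases h : w (Nat.nth p j) with
      | none => exact absurd h this
      | some c => rfl
    have hproj := aux_completion_of_counter w γ (fun k => Nat.count p k) (by simp) (by
      intro i
      by_cases hi : p i
      · right
        refine ⟨?_, by simp [Nat.count_succ, hi]⟩
        rw [← hγ, Nat.nth_count hi]
      · left
        refine ⟨by simpa [p] using hi, by simp [Nat.count_succ, hi]⟩)
    have hbetween : ∀ j i, Nat.nth p j < i → i < Nat.nth p (j + 1) → w i = none := by
      intro j i h1 h2
      by_contra hi
      have hpi : p i := hi
      rw [← Nat.nth_count hpi] at h1 h2
      have h3 := (Nat.nth_lt_nth hinf).1 h1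
      have h4 := (Nat.nth_lt_nth hinf).1 h2
      omega
    refine ⟨γ, ?_, ?_⟩
    · intro k n hn
      simp [hproj]
    · apply hsat (fun j => σ (Nat.nth p j)) γ
      · have := heps 0 (Nat.nth p 0) (by
          intro i _ h2
          by_contra hi
          have hpi : p i := hi
          rw [← Nat.nth_count hpi] at h2
          rw [Nat.zero_add] at h2
          have h3 := (Nat.nth_lt_nth hinf).1 h2
          omega)
        simpa using this
      · intro j
        refine habs _ _ _ _ (hsome _ _ (hγ j)) ?_
        have hlt : Nat.nth p j < Nat.nth p (j + 1) := (Nat.nth_lt_nth hinf).2 (by omega)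
        have := heps (Nat.nth p j + 1) (Nat.nth p (j + 1) - (Nat.nth p j + 1)) (by
          intro i h1 h2
          exact hbetween j i (by omega) (by omega))
        rwa [show Nat.nth p j + 1 + (Nat.nth p (j + 1) - (Nat.nth p j + 1)) = Nat.nth p (j + 1) by
          omega] at this
  · rw [Set.not_infinite] at hinf
    obtain ⟨N, hN⟩ := hinf.bddAbove
    obtain ⟨x, hx⟩ := hne
    refine ⟨listAppend ((List.range (N + 1)).filterMap w) x, ?_, (hW _ _).2 hx⟩
    have hpre : ∀ k, (List.range k).filterMap w <+: (List.range (N + 1)).filterMap w := by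
      intro k
      rcases le_total k (N + 1) with h | h
      · obtain ⟨d, hd⟩ := Nat.exists_eq_add_of_le h
        rw [hd, List.range_add, List.filterMap_append]
        exact List.prefix_append _ _
      · obtain ⟨d, rfl⟩ := Nat.exists_eq_add_of_le h
        rw [List.range_add, List.filterMap_append]
        have : ((List.range d).map (fun x => N + 1 + x)).filterMap w = [] := by
          rw [List.filterMap_eq_nil_iff]
          intro a ha
          by_contra hc
          have := hN (show p a from hc)
          simp at ha
          omega
        rw [this]; simp
    intro k n hn
    have hl := (hpre k).length_le
    rw [listAppend_zero _ _ _ (by omega)]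
    rw [List.get_eq_getElem]
    exact (hpre k).getElem hn

theorem aux_strat {V : Type u} (F : Set V → Set V) (hF : ∀ A, A.Nonempty → (F A ∩ A).Nonempty) :
    ∃ r : V → Ordinal.{u}, ∀ v w,
      (w ∈ F {x | r v ≤ r x} ∧ r v ≤ r w) ↔ r w = r v := by
  classical
  let g : Ordinal.{u} → Set V := WellFoundedLT.fix
    (fun (a : Ordinal.{u}) (ih : ∀ b, b < a → Set V) =>
      F {x | ∀ b (h : b < a), x ∉ ih b h} ∩ {x | ∀ b (h : b < a), x ∉ ih b h})
  have hg : ∀ a, g a = F {x | ∀ b, b < a → x ∉ g b} ∩ {x | ∀ b, b < a → x ∉ g b} := by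
    intro a
    exact WellFoundedLT.fix_eq _ a
  have hex : ∀ v, ∃ a, v ∈ g a := by
    intro v
    by_contra hv
    push Not at hv
    have hne : ∀ a, (g a).Nonempty := by
      intro a
      rw [hg]
      exact hF _ ⟨v, fun b _ => hv b⟩
    choose h hh using hne
    apply not_injective_of_ordinal h
    intro a b hab
    by_contra hne
    rcases lt_or_gt_of_ne hne with hlt | hlt
    · have := hh b
      rw [hg] at this
      exact this.2 a hlt (hab ▸ hh a)
    · have := hh a
      rw [hg] at this
      exact this.2 b hlt (hab ▸ hh b)
  let r : V → Ordinal.{u} := fun v => sInf {a | v ∈ g a}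
  have hr : ∀ v, v ∈ g (r v) := fun v => csInf_mem (s := {a | v ∈ g a}) (hex v)
  have hr' : ∀ v a, v ∈ g a → r v ≤ a := fun v a h => csInf_le' h
  have hset : ∀ a, {x | ∀ b, b < a → x ∉ g b} = {x | a ≤ r x} := by
    intro a
    ext x
    constructor
    · intro h
      by_contra hc
      exact h (r x) (not_le.1 hc) (hr x)
    · intro h b hb hx
      exact absurd (hr' x b hx) (not_le.2 (lt_of_lt_of_le hb h))
  refine ⟨r, fun v w => ?_⟩
  have := hg (r v)
  rw [hset] at this
  constructor
  · intro h
    have hw : w ∈ g (r v) := by rw [this]; exact h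
    exact le_antisymm (hr' _ _ hw) h.2
  · intro h
    have hw := hr w
    rw [h, this] at hw
    exact hw

theorem prefixWord_succ {C : Type u} (w : ℕ → C) (k : ℕ) :
    prefixWord w (k + 1) = prefixWord w k ++ [w k] := by
  unfold prefixWord
  rw [List.ofFn_succ_last]
  simp

theorem prefixWord_append {C : Type u} (u : List C) (w : ℕ → C) (d : ℕ) :
    prefixWord (listAppend u w) (u.length + d) = u ++ prefixWord w d := by
  apply List.ext_getElem
  · simp [prefixWord]
  · intro i h1 h2
    simp only [prefixWord, List.getElem_ofFn, listAppend, List.getElem_append]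
    split_ifs <;> simp

theorem aux_baire {C V : Type u} (T : Pregraph C V) (W : ℕ → Set (ℕ → C))
    (hpi : ∀ i, PrefixIndependent (W i)) (hsig : ∀ i, IsSigmaTwo (W i))
    (hT : T.Sat (⋃ i, W i)) (Z : Set V) (hZ : Z.Nonempty) :
    ∃ t ∈ Z, ∃ i, ∀ π γ, π 0 = t → (∀ n, π n ∈ Z) → T.InfPath π γ → γ ∈ W i := by
  by_contra hcon
  push Not at hcon
  obtain ⟨t0, ht0⟩ := hZ
  choose L hL using hsig
  let Q := {q : List C × V // q.2 ∈ Z}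
  let Step : Q → Q → Prop := fun q q' =>
    ∃ c, q'.1.1 = q.1.1 ++ [c] ∧ T.Edge q.1.2 c q'.1.2
  obtain ⟨f, n, hf0, hf, hn, ht⟩ := aux_weave Step
    (fun j _ q' => q'.1.1 ∈ L (Nat.unpair j).1) ⟨([], t0), ht0⟩ (by
      rintro j ⟨⟨u, t⟩, htZ⟩
      obtain ⟨π, γ, h0, hπ, hp, hγ⟩ := hcon t htZ (Nat.unpair j).1
      have h1 : listAppend u γ ∉ W (Nat.unpair j).1 := fun h => hγ ((hpi _ _ _).1 h)
      rw [hL] at h1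
      have h2 : {k | prefixWord (listAppend u γ) k ∈ L (Nat.unpair j).1}.Infinite := h1
      obtain ⟨k, hk, hlt⟩ := h2.exists_gt u.length
      obtain ⟨d, rfl⟩ := Nat.exists_eq_add_of_lt hlt
      have hk' : u ++ prefixWord γ (d + 1) ∈ L (Nat.unpair j).1 := by
        rw [← prefixWord_append]; exact hk
      refine ⟨⟨(u ++ prefixWord γ (d + 1), π (d + 1)), hπ _⟩, ?_, hk'⟩
      clear hk hk' hlt
      induction d with
      | zero =>
        refine TransGen.single ⟨γ 0, by simp [prefixWord], ?_⟩
        have := hp 0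
        rw [h0] at this; exact this
      | succ d ih =>
        refine TransGen.tail ih ⟨γ (d + 1), ?_, hp (d + 1)⟩
        simp only
        rw [prefixWord_succ γ (d + 1), List.append_assoc])
  choose γ hγ using hf
  have hw : ∀ i, (f i).1.1 = prefixWord γ i := by
    intro i
    induction i with
    | zero => simp [hf0, prefixWord]
    | succ i ih => rw [(hγ i).1, ih, prefixWord_succ]
  have hmem : γ ∈ ⋃ i, W i := hT t0 (fun i => (f i).1.2) γ (by simp [hf0]) (fun i => (hγ i).2)
  obtain ⟨i, hi⟩ := Set.mem_iUnion.1 hmem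
  rw [hL] at hi
  have hfin : {k | prefixWord γ k ∈ L i}.Finite := hi
  refine Set.infinite_of_injective_forall_mem (f := fun a => n (Nat.pair i a + 1)) ?_ ?_ hfin
  · intro a b hab
    have h1 := hn.injective hab
    have h2 : Nat.pair i a = Nat.pair i b := by omega
    exact (Nat.pair_eq_pair.1 h2).2
  · intro a
    have := ht (Nat.pair i a)
    rw [Nat.unpair_pair, hw] at this
    exact this

theorem aux_ranking {C V : Type u} (T : Pregraph C V) (W : ℕ → Set (ℕ → C))
    (hpi : ∀ i, PrefixIndependent (W i)) (hsig : ∀ i, IsSigmaTwo (W i))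
    (hT : T.Sat (⋃ i, W i)) :
    ∃ (ρ : V → Ordinal.{u}) (ι : Ordinal.{u} → ℕ),
      (∀ t c t', T.Edge t c t' → ρ t' ≤ ρ t) ∧
      ∀ l π γ, (∀ n, ρ (π n) = l) → T.InfPath π γ → γ ∈ W (ι l) := by
  classical
  have hb : ∀ Z : Set V, Z.Nonempty → ∃ (t : V) (i : ℕ), t ∈ Z ∧
      ∀ π γ, π 0 = t → (∀ n, π n ∈ Z) → T.InfPath π γ → γ ∈ W i := by
    intro Z hZ
    obtain ⟨t, h1, i, h2⟩ := aux_baire T W hpi hsig hT Z hZ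
    exact ⟨t, i, h1, h2⟩
  choose t0 i0 h1 h2 using hb
  let F : Set V → Set V := fun Z => {t | ∃ h : Z.Nonempty,
    ReflTransGen (fun x y => x ∈ Z ∧ y ∈ Z ∧ ∃ c, T.Edge x c y) (t0 Z h) t}
  obtain ⟨ρ, hρ⟩ := aux_strat F (fun A hA => ⟨t0 A hA, ⟨hA, ReflTransGen.refl⟩, h1 A hA⟩)
  refine ⟨ρ, fun l => if h : ({x | l ≤ ρ x} : Set V).Nonempty then i0 _ h else 0, ?_, ?_⟩
  · intro t c t' he
    by_contra hlt
    rw [not_le] at hlt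
    obtain ⟨⟨hne, hr⟩, _⟩ := (hρ t t).2 rfl
    have := (hρ t t').1 ⟨⟨hne, hr.tail ⟨le_refl (ρ t), hlt.le, c, he⟩⟩, hlt.le⟩
    exact absurd this hlt.ne'
  · intro l π γ hl hp
    obtain ⟨⟨hne, hr⟩, _⟩ := (hρ (π 0) (π 0)).2 rfl
    rw [hl 0] at hne
    simp only [hne, dif_pos]
    have hgen : ∀ t, ReflTransGen (fun x y => x ∈ {x | l ≤ ρ x} ∧ y ∈ {x | l ≤ ρ x} ∧
        ∃ c, T.Edge x c y) (t0 _ hne) t →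
        ∀ π γ, π 0 = t → (∀ n, π n ∈ {x | l ≤ ρ x}) → T.InfPath π γ → γ ∈ W (i0 _ hne) := by
      intro t ht
      induction ht with
      | refl => exact h2 _ hne
      | @tail b d _ hbd ih =>
        obtain ⟨hb, -, c, hc⟩ := hbd
        intro π γ hπ0 hπ hp
        have := ih (fun i => Nat.casesOn i b π) (fun i => Nat.casesOn i c γ) rfl (by
          intro i
          cases i with
          | zero => exact hb
          | succ i => exact hπ i) (by
          intro i
          cases i with
          | zero => simpa [hπ0] using hc
          | succ i => exact hp i)
        exact (aux_tail (hpi _) _ 1).2 this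
    have hr' : ReflTransGen (fun x y => x ∈ {x | l ≤ ρ x} ∧ y ∈ {x | l ≤ ρ x} ∧
        ∃ c, T.Edge x c y) (t0 _ hne) (π 0) := by
      have := hr
      simp only [hl 0] at this
      exact this
    exact hgen _ hr' π γ rfl (fun n => (hl n).ge) hp

theorem aux_sigma_union {C : Type u} (W : ℕ → Set (ℕ → C)) (hsig : ∀ i, IsSigmaTwo (W i)) :
    IsSigmaTwo (⋃ i, W i) := by
  classical
  choose L hL using hsig
  let bad : ℕ → List C → Prop := fun n u =>
    ∃ k ≤ u.length, (Nat.unpair n).2 ≤ k ∧ u.take k ∈ L (Nat.unpair n).1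
  have hlen : ∀ (w : ℕ → C) K, (prefixWord w K).length = K := by simp [prefixWord]
  have htake : ∀ (w : ℕ → C) k K, k ≤ K → (prefixWord w K).take k = prefixWord w k := by
    intro w k K h
    apply List.ext_getElem
    · simp [prefixWord, h]
    · intro i h1 h2
      simp [prefixWord]
  have hbad : ∀ n (w : ℕ → C) K, bad n (prefixWord w K) ↔
      ∃ k ≤ K, (Nat.unpair n).2 ≤ k ∧ prefixWord w k ∈ L (Nat.unpair n).1 := by
    intro n w K
    simp only [bad, hlen]
    constructor
    · rintro ⟨k, h1, h2, h3⟩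
      exact ⟨k, h1, h2, by rwa [htake w k K h1] at h3⟩
    · rintro ⟨k, h1, h2, h3⟩
      exact ⟨k, h1, h2, by rwa [htake w k K h1]⟩
  have hex : ∀ u : List C, ∃ n, ¬ bad n u := by
    intro u
    refine ⟨Nat.pair 0 (u.length + 1), ?_⟩
    rintro ⟨k, h1, h2, -⟩
    rw [Nat.unpair_pair] at h2
    simp only at h2
    omega
  let p : List C → ℕ := fun u => Nat.find (hex u)
  have hmono : ∀ w : ℕ → C, Monotone (fun k => p (prefixWord w k)) := by
    intro w
    apply monotone_nat_of_le_succ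
    intro k
    apply Nat.find_min'
    intro hb
    apply Nat.find_spec (hex (prefixWord w (k + 1)))
    rw [hbad] at hb ⊢
    obtain ⟨j, h1, h2⟩ := hb
    exact ⟨j, by omega, h2⟩
  refine ⟨{u | u ≠ [] ∧ p u.dropLast ≠ p u}, ?_⟩
  have hLm : ∀ (w : ℕ → C) k, prefixWord w (k + 1) ∈ {u : List C | u ≠ [] ∧ p u.dropLast ≠ p u} ↔
      p (prefixWord w k) ≠ p (prefixWord w (k + 1)) := by
    intro w k
    have h1 : (prefixWord w (k + 1)).dropLast = prefixWord w k := by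
      rw [prefixWord_succ]; simp
    have h2 : prefixWord w (k + 1) ≠ [] := by rw [prefixWord_succ]; simp
    simp only [Set.mem_ofPred_eq, h1]
    exact ⟨fun h => h.2, fun h => ⟨h2, h⟩⟩
  ext w
  constructor
  · intro hw
    obtain ⟨i, hi⟩ := Set.mem_iUnion.1 hw
    rw [hL] at hi
    have hfin : {k | prefixWord w k ∈ L i}.Finite := hi
    obtain ⟨N, hN⟩ := hfin.bddAbove
    have hle : ∀ k, p (prefixWord w k) ≤ Nat.pair i (N + 1) := by
      intro k
      apply Nat.find_min'
      rw [hbad]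
      rintro ⟨j, h1, h2, h3⟩
      rw [Nat.unpair_pair] at h2 h3
      have := hN h3
      simp only at h2
      omega
    -- a bounded monotone sequence is eventually constant
    have hev : ∃ M, ∀ k, M ≤ k → p (prefixWord w k) = p (prefixWord w M) := by
      have hbd : BddAbove (Set.range (fun k => p (prefixWord w k))) := by
        refine ⟨Nat.pair i (N + 1), ?_⟩
        rintro _ ⟨k, rfl⟩
        exact hle k
      obtain ⟨M, hM⟩ := Nat.sSup_mem (Set.range_nonempty _) hbd
      refine ⟨M, fun k hk => le_antisymm ?_ (hmono w hk)⟩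
      simp only at hM
      rw [hM]
      exact le_csSup hbd ⟨k, rfl⟩
    obtain ⟨M, hM⟩ := hev
    refine (Set.finite_Iic M).subset ?_
    intro k hk
    by_contra hlt
    simp only [Set.mem_Iic, not_le] at hlt
    cases k with
    | zero => omega
    | succ k =>
      exact (hLm w k).1 hk ((hM k (by omega)).trans (hM (k + 1) (by omega)).symm)
  · intro hfin
    have hfin : {k | prefixWord w k ∈ {u : List C | u ≠ [] ∧ p u.dropLast ≠ p u}}.Finite := hfin
    obtain ⟨N, hN⟩ := hfin.bddAbove
    have hc : ∀ d, p (prefixWord w (N + d)) = p (prefixWord w N) := by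
      intro d
      induction d with
      | zero => rfl
      | succ d ih =>
        rw [← ih]
        by_contra hne
        have := hN ((hLm w (N + d)).2 (fun h => hne h.symm))
        omega
    set n := p (prefixWord w N) with hn
    have hnb : ∀ k, (Nat.unpair n).2 ≤ k → prefixWord w k ∉ L (Nat.unpair n).1 := by
      intro k h1 h2
      have h3 : ¬ bad (p (prefixWord w (N + k))) (prefixWord w (N + k)) := Nat.find_spec (hex _)
      rw [hc, hbad] at h3
      exact h3 ⟨k, by omega, h1, h2⟩
    refine Set.mem_iUnion.2 ⟨(Nat.unpair n).1, ?_⟩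
    rw [hL]
    refine (Set.finite_Iio (Nat.unpair n).2).subset ?_
    intro k hk
    by_contra hlt
    simp only [Set.mem_Iio, not_lt] at hlt
    exact hnb k hlt hk

/-- Vertices of the choice game. -/
inductive GV (V : Type u) : Type u
  | start : GV V
  | ch : V → GV V
  | pick : Set V → GV V
  | pos : V → GV V

/-- Edges of the choice game. -/
inductive GE {C V : Type u} (T : Pregraph C V) (c0 : C) : GV V → Option C → GV V → Prop
  | loop : GE T c0 GV.start none GV.start
  | entry (t : V) : GE T c0 GV.start (some c0) (GV.ch t)
  | chal (t : V) (A : Set V) : t ∈ A → GE T c0 (GV.ch t) none (GV.pick A)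
  | sel (A : Set V) (t : V) : t ∈ A → GE T c0 (GV.pick A) none (GV.pos t)
  | emp : GE T c0 (GV.pick ∅) none GV.start
  | idle (t : V) : GE T c0 (GV.pos t) none (GV.pos t)
  | move (t : V) (c : C) (t' : V) : T.Edge t c t' → GE T c0 (GV.pos t) (some c) (GV.ch t')

/-- States of Eve's strategy in the choice game. -/
inductive SV (V : Type u) : Type u
  | start : SV V
  | ch : V → SV V
  | pick (t : V) (A : Set V) (h : t ∈ A) : SV V
  | pos : V → SV V

/-- Edges of Eve's strategy in the choice game. -/
inductive SE {C V : Type u} (T : Pregraph C V) (c0 : C) : SV V → Option C → SV V → Prop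
  | loop : SE T c0 SV.start none SV.start
  | entry (t : V) : SE T c0 SV.start (some c0) (SV.ch t)
  | chal (t : V) (A : Set V) (h : t ∈ A) : SE T c0 (SV.ch t) none (SV.pick t A h)
  | sel (A : Set V) (t : V) (h : t ∈ A) : SE T c0 (SV.pick t A h) none (SV.pos t)
  | idle (t : V) : SE T c0 (SV.pos t) none (SV.pos t)
  | move (t : V) (c : C) (t' : V) : T.Edge t c t' → SE T c0 (SV.pos t) (some c) (SV.ch t')

/-- Projection of strategy states. -/
def SV.proj {V : Type u} : SV V → GV V
  | .start => .start
  | .ch t => .ch t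
  | .pick _ A _ => .pick A
  | .pos t => .pos t

/-- Current vertex of a strategy state. -/
def SV.cur {V : Type u} : SV V → Option V
  | .start => none
  | .ch t => some t
  | .pick t _ _ => some t
  | .pos t => some t

/-- Eve's vertices in the choice game. -/
def GV.eve {V : Type u} : Set (GV V) := {p | ∃ A, p = GV.pick A}

theorem GE_noSinks {C V : Type u} (T : Pregraph C V) (c0 : C) :
    (Pregraph.mk (GE T c0)).NoSinks := by
  intro p
  cases p with
  | start => exact ⟨_, _, GE.loop⟩
  | ch t => exact ⟨_, _, GE.chal t {t} rfl⟩
  | pick A =>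
    rcases A.eq_empty_or_nonempty with h | ⟨t, ht⟩
    · subst h; exact ⟨_, _, GE.emp⟩
    · exact ⟨_, _, GE.sel A t ht⟩
  | pos t => exact ⟨_, _, GE.idle t⟩

theorem choice_win {C V : Type u} {W : Set (ℕ → C)} (hW : PrefixIndependent W)
    (hne : W.Nonempty) (T : Pregraph C V) (hT : T.Sat W) (c0 : C) :
    EveWins (Pregraph.mk (GE T c0)) GV.eve GV.start (epsObjective W) := by
  refine ⟨SV V, Pregraph.mk (SE T c0), SV.proj, SV.start, ⟨?_, ?_, rfl, ?_⟩, ?_⟩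
  · intro p
    cases p with
    | start => exact ⟨_, _, SE.loop⟩
    | ch t => exact ⟨_, _, SE.chal t {t} rfl⟩
    | pick t A h => exact ⟨_, _, SE.sel A t h⟩
    | pos t => exact ⟨_, _, SE.idle t⟩
  · intro v c v' h
    cases h with
    | loop => exact GE.loop
    | entry t => exact GE.entry t
    | chal t A h => exact GE.chal t A h
    | sel A t h => exact GE.sel A t h
    | idle t => exact GE.idle t
    | move t c t' h => exact GE.move t c t' h
  · intro v hv c v' h s hs
    cases h with
    | loop =>
      cases s <;> simp [SV.proj] at hs
      exact ⟨_, rfl, SE.loop⟩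
    | entry t =>
      cases s <;> simp [SV.proj] at hs
      exact ⟨SV.ch t, rfl, SE.entry t⟩
    | chal t A h =>
      cases s <;> simp [SV.proj] at hs
      subst hs
      exact ⟨SV.pick _ A h, rfl, SE.chal _ A h⟩
    | sel A t h => exact absurd ⟨A, rfl⟩ hv
    | emp => exact absurd ⟨∅, rfl⟩ hv
    | idle t =>
      cases s <;> simp [SV.proj] at hs
      subst hs
      exact ⟨SV.pos _, rfl, SE.idle _⟩
    | move t c t' h =>
      cases s <;> simp [SV.proj] at hs
      subst hs
      exact ⟨SV.ch t', rfl, SE.move _ c t' h⟩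
  · intro π w h0 hp
    refine eps_mem hW hne (Y := Option V) Eq
      (fun y c y' => ∃ t', y' = some t' ∧ ∀ t, y = some t → T.Edge t c t')
      (fun _ => rfl) (fun _ _ _ => Eq.trans) (fun x c y z h1 h2 => h2 ▸ h1) w
      (fun i => (π i).cur) ?_ ?_ ?_
    · intro i hi
      have h := hp i
      generalize π i = a at *
      generalize π (i + 1) = b at *
      rw [hi] at h
      cases h <;> rfl
    · intro i c hi
      have h := hp i
      generalize π i = a at *
      generalize π (i + 1) = b at *
      rw [hi] at h
      cases h with
      | entry t => exact ⟨t, rfl, fun t h => by simp [SV.cur] at h⟩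
      | move t c t' h =>
        refine ⟨t', rfl, fun t1 h1 => ?_⟩
        simp only [SV.cur, Option.some.injEq] at h1
        subst h1
        exact h
    · intro y γ _ hy
      choose τ h1 h2 using hy
      apply (aux_tail hW γ 1).1
      exact hT (τ 0) τ _ rfl (fun i => h2 (i + 1) (τ i) (h1 i))

theorem lemmaA {C V : Type u} (m : ℕ) {W : Set (ℕ → C)} (hW : PrefixIndependent W)
    (hne : W.Nonempty) (hmem : ObjEpsMemLE W (m : Cardinal.{u})) (T : Pregraph C V)
    (hT : T.Sat W) :
    ∃ (E : Fin m → Ordinal.{u} → C → Fin m → Ordinal.{u} → Prop)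
      (R : V → Fin m → Ordinal.{u} → Prop),
      (∀ k x c k' x' y y', E k x c k' x' → x ≤ y → y' ≤ x' → E k y c k' y') ∧
      (∀ (k : ℕ → Fin m) (x : ℕ → Ordinal.{u}) (γ : ℕ → C),
        (∀ i, E (k i) (x i) (γ i) (k (i + 1)) (x (i + 1))) → γ ∈ W) ∧
      (∀ t, ∃ k x, R t k x) ∧
      (∀ t k x c t', R t k x → T.Edge t c t' → ∃ k' x', R t' k' x' ∧ E k x c k' x') := by
  classical
  have hc0 : Nonempty C := hne.elim fun w _ => ⟨w 0⟩
  obtain ⟨c0⟩ := hc0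
  obtain ⟨M, D, S, s0, hM, ⟨⟨hns, hmor, hs0, hadam⟩, heps⟩, hsat⟩ :=
    hmem _ _ (GE_noSinks T c0) GV.eve GV.start (choice_win hW hne T hT c0)
  have hM' : #M ≤ #(ULift.{u} (Fin m)) := by simpa using hM
  obtain ⟨e⟩ := hM'
  have heinj : ∀ a b : M, (e a).down = (e b).down → a = b :=
    fun a b h => e.injective (ULift.down_injective h)
  let Node : GV V → M → Prop := fun p a => ∃ h : (p, a) ∈ D, Reach S s0 ⟨(p, a), h⟩
  let Ed : GV V → M → Option C → GV V → M → Prop := fun p a o p' a' =>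
    ∃ (h : (p, a) ∈ D) (h' : (p', a') ∈ D), Reach S s0 ⟨(p, a), h⟩ ∧
      S.Edge ⟨(p, a), h⟩ o ⟨(p', a'), h'⟩
  have hEN : ∀ p a o p' a', Ed p a o p' a' → Node p' a' := by
    rintro p a o p' a' ⟨h, h', hr, he⟩
    exact ⟨h', hr.tail ⟨o, he⟩⟩
  have F1 : ∀ p a o p', Node p a → p ∉ GV.eve → GE T c0 p o p' → ∃ a', Ed p a o p' a' := by
    rintro p a o p' ⟨h, hr⟩ hp hg
    obtain ⟨⟨⟨q, a'⟩, hq⟩, h1, h2⟩ := hadam p hp o p' hg ⟨(p, a), h⟩ rfl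
    simp only at h1
    subst h1
    exact ⟨a', h, hq, hr, h2⟩
  have F1' : ∀ p a p', Node p a → p ∉ GV.eve → GE T c0 p none p' → Ed p a none p' a := by
    intro p a p' h1 h2 h3
    obtain ⟨a', h4⟩ := F1 p a none p' h1 h2 h3
    obtain ⟨g, g', hr, he⟩ := h4
    have : a = a' := heps _ _ he
    subst this
    exact ⟨g, g', hr, he⟩
  have F2 : ∀ A a, Node (GV.pick A) a → A.Nonempty →
      ∃ t, t ∈ A ∧ Ed (GV.pick A) a none (GV.pos t) a := by
    rintro A a ⟨h, hr⟩ hA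
    obtain ⟨o, ⟨⟨q, a'⟩, hq⟩, he⟩ := hns ⟨(GV.pick A, a), h⟩
    have hg : GE T c0 (GV.pick A) o q := hmor he
    cases hg with
    | sel _ t ht =>
      have : a = a' := heps _ _ he
      subst this
      exact ⟨t, ht, h, hq, hr, he⟩
    | emp => exact absurd hA Set.not_nonempty_empty
  let F : M → Set V → Set V := fun a A =>
    if h : ∃ t, t ∈ A ∧ Ed (GV.pick A) a none (GV.pos t) a then {h.choose} else A
  have hF : ∀ a A, A.Nonempty → (F a A ∩ A).Nonempty := by
    intro a A hA
    by_cases h : ∃ t, t ∈ A ∧ Ed (GV.pick A) a none (GV.pos t) a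
    · simp only [F, dif_pos h]
      exact ⟨_, rfl, h.choose_spec.1⟩
    · simp only [F, dif_neg h]
      simpa using hA
  have hr := fun a => aux_strat (F a) (hF a)
  choose r hr using hr
  have key : ∀ a v w, Node (GV.ch w) a → r a v ≤ r a w → ∃ A,
      Ed (GV.ch w) a none (GV.pick A) a ∧ Ed (GV.pick A) a none (GV.pos v) a := by
    intro a v w hw hle
    have h1 := F1' _ _ _ hw (by rintro ⟨A, h⟩; cases h) (GE.chal w {x | r a v ≤ r a x} hle)
    refine ⟨_, h1, ?_⟩
    have h := F2 _ _ (hEN _ _ _ _ _ h1) ⟨w, hle⟩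
    have h3 := ((hr a v v).2 rfl).1
    simp only [F] at h3
    rw [dif_pos h] at h3
    have h4 := h.choose_spec.2
    rw [← (show v = _ from h3)] at h4
    exact h4
  have hchE : ∀ t : V, GV.ch t ∉ (GV.eve : Set (GV V)) := by rintro t ⟨A, h⟩; cases h
  have hposE : ∀ t : V, GV.pos t ∉ (GV.eve : Set (GV V)) := by rintro t ⟨A, h⟩; cases h
  have hstE : GV.start ∉ (GV.eve : Set (GV V)) := by rintro ⟨A, h⟩; cases h
  refine ⟨fun k x c k' x' => ∃ a a' t t', (e a).down = k ∧ (e a').down = k' ∧ r a t ≤ x ∧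
      x' ≤ r a' t' ∧ Ed (GV.pos t) a (some c) (GV.ch t') a',
    fun t k x => ∃ a, (e a).down = k ∧ Node (GV.ch t) a ∧ x = r a t, ?_, ?_, ?_, ?_⟩
  · rintro k x c k' x' y y' ⟨a, a', t, t', h1, h2, h3, h4, h5⟩ hy hy'
    exact ⟨a, a', t, t', h1, h2, h3.trans hy, hy'.trans h4, h5⟩
  · intro k x γ h
    choose a a' t t' h1 h2 h3 h4 h5 using h
    have haa : ∀ i, a (i + 1) = a' i := fun i => heinj _ _ ((h1 (i + 1)).trans (h2 i).symm)
    have hN : ∀ i, Node (GV.ch (t' i)) (a' i) := fun i => hEN _ _ _ _ _ (h5 i)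
    choose g hg using hN
    apply (aux_tail hW γ 1).1
    refine lft_path (vertexSat_reach hW hsat (hg 0))
      (fun i => ⟨(GV.ch (t' i), a' i), g i⟩) _ rfl ?_
    intro i
    obtain ⟨A, ⟨q1, q2, _, e1⟩, ⟨q3, q4, _, e2⟩⟩ := key (a' i) (t (i + 1)) (t' i) ⟨g i, hg i⟩ (by
      have := (h3 (i + 1)).trans (h4 i)
      rw [haa] at this
      exact this)
    have h6 := h5 (i + 1)
    rw [haa] at h6
    obtain ⟨q5, q6, _, e3⟩ := h6
    exact ⟨⟨(GV.pos (t (i + 1)), a' i), q4⟩,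
      (ReflTransGen.single e1).tail e2, e3⟩
  · intro t
    obtain ⟨⟨p, a0⟩, hp⟩ := s0
    simp only at hs0
    subst hs0
    obtain ⟨a, ha⟩ := F1 GV.start a0 _ _ ⟨hp, ReflTransGen.refl⟩ hstE (GE.entry t)
    exact ⟨_, _, a, rfl, hEN _ _ _ _ _ ha, rfl⟩
  · rintro t k x c t' ⟨a, rfl, hN, rfl⟩ he
    obtain ⟨A, h1, h2⟩ := key a t t hN le_rfl
    obtain ⟨a', ha'⟩ := F1 _ _ _ _ (hEN _ _ _ _ _ h2) (hposE t) (GE.move t c t' he)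
    exact ⟨(e a').down, r a' t', ⟨a', rfl, hEN _ _ _ _ _ ha', rfl⟩,
      a, a', t, t', rfl, rfl, le_rfl, le_rfl, ha'⟩

theorem lemmaB {C V : Type u} (m : ℕ) (W : ℕ → Set (ℕ → C))
    (hpi : ∀ i, PrefixIndependent (W i)) (hsig : ∀ i, IsSigmaTwo (W i))
    (hne : ∀ i, (W i).Nonempty)
    (hmem : ∀ i, ObjEpsMemLE (W i) (m : Cardinal.{u})) (T : Pregraph C V)
    (hT : T.Sat (⋃ i, W i)) :
    ∃ (E : Fin m → (Ordinal.{u} ×ₗ Ordinal.{u}) → C → Fin m → (Ordinal.{u} ×ₗ Ordinal.{u}) → Prop)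
      (R : V → Fin m → (Ordinal.{u} ×ₗ Ordinal.{u}) → Prop),
      (∀ k x c k' x' y y', E k x c k' x' → x ≤ y → y' ≤ x' → E k y c k' y') ∧
      (∀ (k : ℕ → Fin m) (x : ℕ → (Ordinal.{u} ×ₗ Ordinal.{u})) (γ : ℕ → C),
        (∀ i, E (k i) (x i) (γ i) (k (i + 1)) (x (i + 1))) → γ ∈ ⋃ i, W i) ∧
      (∀ t, ∃ k x, R t k x) ∧
      (∀ t k x c t', R t k x → T.Edge t c t' → ∃ k' x', R t' k' x' ∧ E k x c k' x') := by
  obtain ⟨ρ, ι, hρ, hι⟩ := aux_ranking T W hpi hsig hT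
  have hA := fun l : Ordinal.{u} => lemmaA m (hpi (ι l)) (hne (ι l)) (hmem (ι l))
    (Pregraph.mk (fun t c t' => ρ t = l ∧ ρ t' = l ∧ T.Edge t c t')) (by
      intro v π γ _ hp
      exact hι l π γ (fun n => (hp n).1) (fun n => (hp n).2.2))
  choose E R hmono hsat htot hsim using hA
  refine ⟨fun k x c k' x' => (ofLex x').1 < (ofLex x).1 ∨
      ((ofLex x').1 = (ofLex x).1 ∧ E (ofLex x).1 k (ofLex x).2 c k' (ofLex x').2),
    fun t k x => (ofLex x).1 = ρ t ∧ R (ρ t) t k (ofLex x).2, ?_, ?_, ?_, ?_⟩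
  · intro k x c k' x' y y' h hxy hyx
    rw [Prod.Lex.le_iff] at hxy hyx
    rcases h with h | ⟨h, h'⟩
    · left
      have h1 : (ofLex x).1 ≤ (ofLex y).1 := hxy.elim le_of_lt (fun h => h.1.le)
      have h2 : (ofLex y').1 ≤ (ofLex x').1 := hyx.elim le_of_lt (fun h => h.1.le)
      exact lt_of_le_of_lt h2 (lt_of_lt_of_le h h1)
    · rcases hxy with h1 | ⟨h1, h1'⟩
      · left
        have h2 : (ofLex y').1 ≤ (ofLex x').1 := hyx.elim le_of_lt (fun h => h.1.le)
        exact lt_of_le_of_lt h2 (h ▸ h1)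
      · rcases hyx with h2 | ⟨h2, h2'⟩
        · left
          rw [← h1, ← h]; exact h2
        · right
          refine ⟨by rw [h2, h, h1], ?_⟩
          rw [← h1]
          exact hmono _ _ _ _ _ _ _ _ h' h1' h2'
  · intro k x γ h
    have hanti : Antitone (fun i => (ofLex (x i)).1) := by
      apply antitone_nat_of_succ_le
      intro i
      exact (h i).elim le_of_lt (fun h => h.1.le)
    obtain ⟨N, hN⟩ : ∃ N, ∀ i, N ≤ i → (ofLex (x i)).1 = (ofLex (x N)).1 := by
      obtain ⟨N, hN⟩ := WellFounded.has_min (α := Ordinal.{u}) wellFounded_lt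
        (Set.range (fun i => (ofLex (x i)).1)) (Set.range_nonempty _)
      obtain ⟨⟨n, rfl⟩, hN⟩ := hN
      refine ⟨n, fun i hi => le_antisymm (hanti hi) ?_⟩
      exact not_lt.1 (hN _ ⟨i, rfl⟩)
    refine Set.mem_iUnion.2 ⟨ι (ofLex (x N)).1, ?_⟩
    rw [← aux_tail (hpi _) γ N]
    apply hsat (ofLex (x N)).1 (fun i => k (i + N)) (fun i => (ofLex (x (i + N))).2)
    intro i
    rcases h (i + N) with h1 | ⟨h1, h2⟩
    · rw [hN (i + N) (by omega), hN (i + N + 1) (by omega)] at h1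
      exact absurd h1 (lt_irrefl _)
    · rw [hN (i + N) (by omega)] at h2
      rw [show i + 1 + N = i + N + 1 by omega]
      exact h2
  · intro t
    obtain ⟨k, x, h⟩ := htot (ρ t) t
    exact ⟨k, toLex (ρ t, x), rfl, h⟩
  · rintro t k x c t' ⟨h1, h2⟩ he
    rcases (hρ t c t' he).lt_or_eq with h | h
    · obtain ⟨k', x', h'⟩ := htot (ρ t') t'
      refine ⟨k', toLex (ρ t', x'), ⟨rfl, h'⟩, Or.inl ?_⟩
      rw [h1]; exact h
    · obtain ⟨k', x', h3, h4⟩ := hsim (ρ t) t k (ofLex x).2 c t' h2 ⟨rfl, h, he⟩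
      refine ⟨k', toLex (ρ t', x'), ⟨rfl, by rw [h]; exact h3⟩, Or.inr ⟨?_, ?_⟩⟩
      · rw [h1]; exact h
      · rw [h1]; exact h4

theorem lemmaF {C V VS K : Type u} {X : Type*} [LinearOrder X] [WellFoundedLT X]
    {W : Set (ℕ → C)} (hW : PrefixIndependent W) (hne : W.Nonempty)
    (G : Pregraph (Option C) V) (VEve : Set V) (v0 : V)
    (S : Pregraph (Option C) VS) (pr : VS → V) (s0 : VS) (hS : IsStrategy G VEve v0 S pr s0)
    (E : K → X → C → K → X → Prop) (R : VS → K → X → Prop)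
    (hmono : ∀ k x c k' x' y y', E k x c k' x' → x ≤ y → y' ≤ x' → E k y c k' y')
    (hsat : ∀ (k : ℕ → K) (x : ℕ → X) (γ : ℕ → C),
        (∀ i, E (k i) (x i) (γ i) (k (i + 1)) (x (i + 1))) → γ ∈ W)
    (hroot : ∃ k x, R s0 k x)
    (hsim : ∀ s k x c s', R s k x → Lft S s c s' → ∃ k' x', R s' k' x' ∧ E k x c k' x') :
    ∃ (D : Set (V × K)) (S' : Pregraph (Option C) ↥D) (p0 : ↥D),
      IsEpsStrategy G VEve v0 D S' p0 ∧ S'.VertexSat (epsObjective W) p0 := by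
  classical
  obtain ⟨hns, hmor, hs0, hadam⟩ := hS
  let R' : VS → K → X → Prop := fun s k x =>
    ∃ s1, R s1 k x ∧ ReflTransGen (fun x y => S.Edge x none y) s1 s
  let D : Set (V × K) := {p | ∃ x s, pr s = p.1 ∧ R' s p.2 x}
  have hmin : ∀ p : ↥D, ∃ x, (∃ s, pr s = p.1.1 ∧ R' s p.1.2 x) ∧
      ∀ y s, pr s = p.1.1 → R' s p.1.2 y → x ≤ y := by
    rintro ⟨p, hp⟩
    obtain ⟨x, hx, hmin⟩ := WellFounded.has_min (α := X) wellFounded_lt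
      {x | ∃ s, pr s = p.1 ∧ R' s p.2 x} hp
    exact ⟨x, hx, fun y s h1 h2 => not_lt.1 (hmin y ⟨s, h1, h2⟩)⟩
  choose μ hμ hμmin using hmin
  let S' : Pregraph (Option C) ↥D := ⟨fun p o p' => G.Edge p.1.1 o p'.1.1 ∧
    (o = none → p.1.2 = p'.1.2 ∧ μ p' ≤ μ p) ∧
    (∀ c, o = some c → E p.1.2 (μ p) c p'.1.2 (μ p'))⟩
  have key : ∀ (p : ↥D) s o s', pr s = p.1.1 → R' s p.1.2 (μ p) → S.Edge s o s' →
      ∃ p' : ↥D, p'.1.1 = pr s' ∧ S'.Edge p o p' := by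
    rintro p s o s' hs ⟨s1, hR, hrt⟩ he
    cases o with
    | none =>
      have h1 : R' s' p.1.2 (μ p) := ⟨s1, hR, hrt.tail he⟩
      refine ⟨⟨(pr s', p.1.2), ⟨_, s', rfl, h1⟩⟩, rfl, ?_, ?_, ?_⟩
      · rw [← hs]; exact hmor he
      · intro _
        exact ⟨rfl, hμmin _ _ s' rfl h1⟩
      · intro c h; cases h
    | some c =>
      obtain ⟨k', x', h1, h2⟩ := hsim s1 _ _ c s' hR ⟨s, hrt, he⟩
      have h3 : R' s' k' x' := ⟨s', h1, ReflTransGen.refl⟩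
      refine ⟨⟨(pr s', k'), ⟨_, s', rfl, h3⟩⟩, rfl, ?_, ?_, ?_⟩
      · rw [← hs]; exact hmor he
      · intro h; cases h
      · intro c' h
        cases h
        exact hmono _ _ _ _ _ _ _ h2 le_rfl (hμmin _ _ s' rfl h3)
  obtain ⟨k0, x0, h0⟩ := hroot
  refine ⟨D, S', ⟨(v0, k0), ⟨x0, s0, hs0, s0, h0, ReflTransGen.refl⟩⟩,
    ⟨⟨?_, ?_, rfl, ?_⟩, ?_⟩, ?_⟩
  · intro p
    obtain ⟨s, h1, h2⟩ := hμ p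
    obtain ⟨o, s', he⟩ := hns s
    obtain ⟨p', _, h3⟩ := key p s o s' h1 h2 he
    exact ⟨o, p', h3⟩
  · intro p o p' h
    exact h.1
  · intro v hv o v' hg p hp
    obtain ⟨s, h1, h2⟩ := hμ p
    obtain ⟨s', h3, h4⟩ := hadam v hv o v' hg s (h1.trans hp)
    obtain ⟨p', h5, h6⟩ := key p s o s' h1 h2 h4
    exact ⟨p', h5.trans h3, h6⟩
  · intro p p' h
    exact (h.2.1 rfl).1
  · intro π w _ hp
    refine eps_mem hW hne (Y := K × X) (fun y z => y.1 = z.1 ∧ z.2 ≤ y.2)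
      (fun y c z => E y.1 y.2 c z.1 z.2) (fun y => ⟨rfl, le_rfl⟩)
      (fun x y z h1 h2 => ⟨h1.1.trans h2.1, h2.2.trans h1.2⟩) ?_ w
      (fun i => ((π i).1.2, μ (π i))) ?_ ?_ ?_
    · rintro x c y z h1 ⟨h2, h3⟩
      rw [← h2]
      exact hmono _ _ _ _ _ _ _ h1 le_rfl h3
    · intro i hi
      exact (hp i).2.1 hi
    · intro i c hi
      exact (hp i).2.2 c hi
    · intro y γ _ hy
      exact hsat (fun i => (y i).1) (fun i => (y i).2) γ hy

theorem prefixIndependent_iUnion {C : Type u} (W : ℕ → Set (ℕ → C))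
    (hpi : ∀ i, PrefixIndependent (W i)) : PrefixIndependent (⋃ i, W i) := by
  intro u w
  simp only [Set.mem_iUnion]
  exact exists_congr fun i => hpi i u w

theorem lemmaG {C : Type u} (m : ℕ) (W : ℕ → Set (ℕ → C))
    (hpi : ∀ i, PrefixIndependent (W i))
    (hsig : ∀ i, IsSigmaTwo (W i)) (hne : ∀ i, (W i).Nonempty)
    (hmem : ∀ i, ObjEpsMemLE (W i) (m : Cardinal.{u})) :
    ObjEpsMemLE (⋃ i, W i) (m : Cardinal.{u}) := by
  intro V G hG VEve v0 ⟨VS, S, pr, s0, hS, hwin⟩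
  have hpu := prefixIndependent_iUnion W hpi
  have hneu : (⋃ i, W i).Nonempty := (hne 0).mono (Set.subset_iUnion W 0)
  obtain ⟨E, R, hmono, hsat, htot, hsim⟩ := lemmaB m W hpi hsig hne hmem
    (Pregraph.mk (fun s c s' => Reach S s0 s ∧ Lft S s c s')) (by
      intro s π γ h0 hp
      have hr := (hp 0).1
      exact lft_path (vertexSat_reach hpu hwin hr) π γ rfl (fun i => (hp i).2))
  have hreach : ∀ s c s', Reach S s0 s → Lft S s c s' → Reach S s0 s' := by
    rintro s c s' hr ⟨a, h1, h2⟩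
    have h3 : Reach S s a := by
      clear h2
      induction h1 with
      | refl => exact ReflTransGen.refl
      | tail _ h ih => exact ReflTransGen.tail ih ⟨none, h⟩
    exact (ReflTransGen.trans hr h3).tail ⟨_, h2⟩
  obtain ⟨D, S', p0, h1, h2⟩ := lemmaF (K := ULift.{u} (Fin m)) hpu hneu G VEve v0 S pr s0 hS
    (fun k x c k' x' => E k.down x c k'.down x')
    (fun s k x => Reach S s0 s ∧ R s k.down x)
    (fun k x c k' x' y y' => hmono _ _ _ _ _ _ _)
    (fun k x γ h => hsat (fun i => (k i).down) x γ h)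
    (by
      obtain ⟨k, x, h⟩ := htot s0
      exact ⟨⟨k⟩, x, ReflTransGen.refl, h⟩)
    (by
      rintro s k x c s' ⟨hr, hR⟩ hl
      obtain ⟨k', x', h1, h2⟩ := hsim s k.down x c s' hR ⟨hr, hl⟩
      exact ⟨⟨k'⟩, x', ⟨hreach _ _ _ hr hl, h1⟩, h2⟩)
  exact ⟨ULift.{u} (Fin m), D, S', p0, by simp, h1, h2⟩

theorem lemmaH {C : Type u} (m : ℕ) (W : ℕ → Set (ℕ → C))
    (hpi : ∀ i, PrefixIndependent (W i))
    (hsig : ∀ i, IsSigmaTwo (W i))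
    (hmem : ∀ i, ObjEpsMemLE (W i) (m : Cardinal.{u})) :
    ObjEpsMemLE (⋃ i, W i) (m : Cardinal.{u}) := by
  classical
  by_cases hex : ∃ j, (W j).Nonempty
  · obtain ⟨j, hj⟩ := hex
    let f : ℕ → ℕ := fun i => if (W i).Nonempty then i else j
    have hf : ∀ i, (W (f i)).Nonempty := by
      intro i
      simp only [f]
      split_ifs with h
      · exact h
      · exact hj
    have hu : (⋃ i, W i) = ⋃ i, W (f i) := by
      apply Set.Subset.antisymm
      · apply Set.iUnion_subset
        intro i w hw
        have : f i = i := by simp only [f]; rw [if_pos ⟨w, hw⟩]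
        exact Set.mem_iUnion.2 ⟨i, by rw [this]; exact hw⟩
      · exact Set.iUnion_subset fun i => Set.subset_iUnion W (f i)
    rw [hu]
    exact lemmaG m (fun i => W (f i)) (fun i => hpi _) (fun i => hsig _) hf (fun i => hmem _)
  · push Not at hex
    rintro V G hG VEve v0 ⟨VS, S, pr, s0, hS, hwin⟩
    exfalso
    choose o nx hnx using hS.1
    let π : ℕ → VS := fun i => nx^[i] s0
    obtain ⟨w', -, hw'⟩ := hwin π (fun i => o (π i)) rfl (by
      intro i
      simp only [π, Function.iterate_succ_apply']
      exact hnx _)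
    obtain ⟨i, hi⟩ := Set.mem_iUnion.1 hw'
    simp [hex i] at hi

end Aux

/-- Prefix-independent Σ⁰₂ objectives with ε-memory ≤ m are closed
under countable unions. -/
theorem sigma2_union_epsMemory
    {C : Type u} (m : ℕ) (W : ℕ → Set (ℕ → C))
    (hpi : ∀ i, PrefixIndependent (W i))
    (hsig : ∀ i, IsSigmaTwo (W i))
    (hmem : ∀ i, ObjEpsMemLE (W i) (m : Cardinal.{u})) :
    PrefixIndependent (⋃ i, W i) ∧ IsSigmaTwo (⋃ i, W i) ∧
    ObjEpsMemLE (⋃ i, W i) (m : Cardinal.{u}) := by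
  exact ⟨prefixIndependent_iUnion W hpi, aux_sigma_union W hsig, lemmaH m W hpi hsig hmem⟩
end
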